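/- There exists a universal constant C ∈ (0,∞) with the following property. Let q ∈ [2,∞) and n ∈ ℕ satisfy n ≥ q². Let (X,‖·‖_X) and (Y,‖·‖_Y) be Banach spaces with dim(X)=n and m_q(Y)<∞. Then every compactly supported 1-Lipschitz function f:X→Y satisfies (∫_X ∫_0^∞ inf_{Λ ∈ A(X,Y), ‖Λ‖_{Lip(X,Y)}≤1} fint_{x+tB_X} ‖f(y)−Λ(y)‖_Y^q / t^{q+1} dy dt dx)^{1/q} ≤ C·n^{9/20}·(log n)^{1/5}·m_q(Y)·|supp(f)|^{1/q}. -/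

import Mathlib

open MeasureTheory Metric Set ENNReal

noncomputable section

universe u

/-- `N` is a norm on the real vector space `V`. -/
def IsNorm {V : Type*} [AddCommGroup V] [Module ℝ V] (N : V → ℝ) : Prop :=
  (∀ x, N x = 0 → x = 0) ∧ (∀ (a : ℝ) (x : V), N (a • x) = |a| * N x) ∧
    (∀ x y : V, N (x + y) ≤ N x + N y)

/-- `m` is an upper bound for the martingale cotype `q` constant `𝔪_q(Y)` of `Y`. -/
def MartCotypeBound (q : ℝ) (Y : Type*) [NormedAddCommGroup Y] [NormedSpace ℝ Y]
    [CompleteSpace Y] (m : ℝ) : Prop :=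
  ∀ (Ω : Type) [MeasurableSpace Ω] (μ : Measure Ω) [IsProbabilityMeasure μ]
    (ℱ : Filtration ℕ ‹MeasurableSpace Ω›) (M : ℕ → Ω → Y), Martingale M ℱ μ →
    ∀ B : ℝ≥0∞, (∀ k, ∫⁻ ω, (‖M k ω‖₊ : ℝ≥0∞) ^ q ∂μ ≤ B) →
      ∑' k : ℕ, ∫⁻ ω, (‖M (k + 1) ω - M k ω‖₊ : ℝ≥0∞) ^ q ∂μ ≤ ENNReal.ofReal m ^ q * B

namespace Dorr

/-- Jensen for probability measures. -/
lemma lintegral_rpow_jensen {α : Type*} [MeasurableSpace α] (μ : Measure α)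
    [IsProbabilityMeasure μ] {g : α → ℝ≥0∞} (hg : AEMeasurable g μ) {q : ℝ} (hq : 1 ≤ q) :
    (∫⁻ a, g a ∂μ) ^ q ≤ ∫⁻ a, g a ^ q ∂μ := by
  have h := eLpNorm'_le_eLpNorm'_of_exponent_le (f := g) (p := 1) (q := q) one_pos hq μ
    hg.aestronglyMeasurable
  simp only [eLpNorm', enorm_eq_self, ENNReal.rpow_one, one_div, inv_one] at h
  have hq0 : 0 < q := by linarith
  calc (∫⁻ a, g a ∂μ) ^ q ≤ ((∫⁻ a, g a ^ q ∂μ) ^ q⁻¹) ^ q :=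
        ENNReal.rpow_le_rpow h hq0.le
    _ = _ := by rw [← ENNReal.rpow_mul, inv_mul_cancel₀ hq0.ne', ENNReal.rpow_one]

lemma enorm_integral_rpow_le {α : Type*} [MeasurableSpace α] (μ : Measure α)
    [IsProbabilityMeasure μ] {Z : Type*} [NormedAddCommGroup Z] [NormedSpace ℝ Z] {g : α → Z}
    (hg : AEStronglyMeasurable g μ) {q : ℝ} (hq : 1 ≤ q) :
    ‖∫ a, g a ∂μ‖ₑ ^ q ≤ ∫⁻ a, ‖g a‖ₑ ^ q ∂μ :=
  (ENNReal.rpow_le_rpow (enorm_integral_le_lintegral_enorm g) (by linarith)).trans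
    (lintegral_rpow_jensen μ hg.enorm hq)

lemma add_rpow_le' (a b : ℝ≥0∞) {q : ℝ} (hq : 0 ≤ q) :
    (a + b) ^ q ≤ 2 ^ q * (a ^ q + b ^ q) := by
  rcases le_total a b with h | h
  · calc (a + b) ^ q ≤ (2 * b) ^ q := ENNReal.rpow_le_rpow (by rw [two_mul]; gcongr) hq
      _ = 2 ^ q * b ^ q := ENNReal.mul_rpow_of_nonneg _ _ hq
      _ ≤ _ := by gcongr; exact le_add_self
  · calc (a + b) ^ q ≤ (2 * a) ^ q := ENNReal.rpow_le_rpow (by rw [two_mul]; gcongr) hq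
      _ = 2 ^ q * a ^ q := ENNReal.mul_rpow_of_nonneg _ _ hq
      _ ≤ _ := by gcongr; exact le_self_add

lemma add3_rpow_le' (a b c : ℝ≥0∞) {q : ℝ} (hq : 0 ≤ q) :
    (a + b + c) ^ q ≤ 4 ^ q * (a ^ q + b ^ q + c ^ q) := by
  have h4 : (4 : ℝ≥0∞) ^ q = 2 ^ q * 2 ^ q := by
    rw [← ENNReal.mul_rpow_of_nonneg _ _ hq]; norm_num
  have h1 : (1 : ℝ≥0∞) ≤ 2 ^ q := by
    simpa using ENNReal.rpow_le_rpow (show (1 : ℝ≥0∞) ≤ 2 by norm_num) hq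
  calc (a + b + c) ^ q ≤ 2 ^ q * ((a + b) ^ q + c ^ q) := add_rpow_le' _ _ hq
    _ ≤ 2 ^ q * (2 ^ q * (a ^ q + b ^ q) + 2 ^ q * c ^ q) := by
        gcongr
        · exact add_rpow_le' _ _ hq
        · calc c ^ q = 1 * c ^ q := (one_mul _).symm
            _ ≤ _ := by gcongr
    _ = _ := by rw [h4]; ring

section Norm

variable {n : ℕ} {N : EuclideanSpace ℝ (Fin n) → ℝ}

lemma N_zero (hN : IsNorm N) : N 0 = 0 := by simpa using hN.2.1 0 0

lemma N_neg (hN : IsNorm N) (x) : N (-x) = N x := by simpa using hN.2.1 (-1) x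

lemma N_nonneg (hN : IsNorm N) (x) : 0 ≤ N x := by
  have h := hN.2.2 x (-x)
  rw [N_neg hN, add_neg_cancel, N_zero hN] at h
  linarith

lemma N_smul (hN : IsNorm N) {a : ℝ} (ha : 0 ≤ a) (x) : N (a • x) = a * N x := by
  rw [hN.2.1, abs_of_nonneg ha]

lemma N_bound (hN : IsNorm N) : ∃ C : ℝ, 0 < C ∧ ∀ x, N x ≤ C * ‖x‖ := by
  refine ⟨1 + ∑ i, N (EuclideanSpace.single i 1), ?_, fun x => ?_⟩
  · have : 0 ≤ ∑ i, N (EuclideanSpace.single i (1 : ℝ)) :=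
      Finset.sum_nonneg fun i _ => N_nonneg hN _
    linarith
  have hx : x = ∑ i, x i • EuclideanSpace.single i (1 : ℝ) := by
    ext j
    simp [Finset.sum_apply, Pi.single_apply]
  have hs : ∀ s : Finset (Fin n), N (∑ i ∈ s, x i • EuclideanSpace.single i (1 : ℝ))
      ≤ ∑ i ∈ s, ‖x‖ * N (EuclideanSpace.single i 1) := by
    intro s
    classical
    induction s using Finset.induction_on with
    | empty => simp [N_zero hN]
    | insert a s ha ih =>
      rw [Finset.sum_insert ha, Finset.sum_insert ha]
      refine (hN.2.2 _ _).trans (add_le_add ?_ ih)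
      rw [hN.2.1]
      gcongr
      · exact N_nonneg hN _
      · exact PiLp.norm_apply_le x a
  have h := hs Finset.univ
  rw [← hx, ← Finset.mul_sum] at h
  nlinarith [norm_nonneg x]

lemma N_cont (hN : IsNorm N) : Continuous N := by
  obtain ⟨C, hC, h⟩ := N_bound hN
  have : LipschitzWith ⟨C, hC.le⟩ N := by
    apply LipschitzWith.of_le_add_mul
    intro x y
    have h1 := hN.2.2 (x - y) y
    rw [sub_add_cancel] at h1
    have h2 := h (x - y)
    rw [dist_eq_norm]
    change N x ≤ N y + C * ‖x - y‖
    linarith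
  exact this.continuous

lemma N_lower (hN : IsNorm N) : ∃ c : ℝ, 0 < c ∧ ∀ x, c * ‖x‖ ≤ N x := by
  by_cases hne : (sphere (0 : EuclideanSpace ℝ (Fin n)) 1).Nonempty
  · obtain ⟨x₀, hx₀, hmin⟩ := (isCompact_sphere (0 : EuclideanSpace ℝ (Fin n)) 1).exists_isMinOn
      hne (N_cont hN).continuousOn
    have hpos : 0 < N x₀ := by
      refine lt_of_le_of_ne (N_nonneg hN _) fun h => ?_
      have := hN.1 _ h.symm
      simp [this] at hx₀
    refine ⟨N x₀, hpos, fun x => ?_⟩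
    by_cases hx : x = 0
    · simp [hx, N_zero hN]
    have hxn : 0 < ‖x‖ := norm_pos_iff.2 hx
    have hm : (‖x‖⁻¹ • x) ∈ sphere (0 : EuclideanSpace ℝ (Fin n)) 1 := by
      simp [norm_smul, hxn.ne']
    have h1 : N x₀ ≤ N (‖x‖⁻¹ • x) := hmin hm
    rw [N_smul hN (by positivity)] at h1
    calc N x₀ * ‖x‖ ≤ (‖x‖⁻¹ * N x) * ‖x‖ := by gcongr
      _ = N x := by field_simp
  · refine ⟨1, one_pos, fun x => ?_⟩
    by_cases hx : x = 0
    · simp [hx, N_zero hN]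
    · exfalso
      apply hne
      have hxn : 0 < ‖x‖ := norm_pos_iff.2 hx
      exact ⟨‖x‖⁻¹ • x, by simp [norm_smul, hxn.ne']⟩

/-- The ball of radius `r`. -/
def KB (N : EuclideanSpace ℝ (Fin n) → ℝ) (r : ℝ) : Set (EuclideanSpace ℝ (Fin n)) := {y | N y ≤ r}

lemma KB_closed (hN : IsNorm N) (r : ℝ) : IsClosed (KB N r) :=
  isClosed_le (N_cont hN) continuous_const

lemma KB_meas (hN : IsNorm N) (r : ℝ) : MeasurableSet (KB N r) := (KB_closed hN r).measurableSet

lemma KB_compact (hN : IsNorm N) (r : ℝ) : IsCompact (KB N r) := by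
  obtain ⟨c, hc, h⟩ := N_lower hN
  apply Metric.isCompact_of_isClosed_isBounded (KB_closed hN r)
  apply (Metric.isBounded_closedBall (x := (0 : EuclideanSpace ℝ (Fin n))) (r := r / c)).subset
  intro x hx
  rw [mem_closedBall_zero_iff, le_div_iff₀ hc]
  have := h x
  have hx' : N x ≤ r := hx
  linarith

lemma KB_vol_ne_top (hN : IsNorm N) (r : ℝ) : volume (KB N r) ≠ ⊤ :=
  (KB_compact hN r).measure_lt_top.ne

lemma KB_vol_ne_zero (hN : IsNorm N) {r : ℝ} (hr : 0 < r) : volume (KB N r) ≠ 0 := by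
  have ho : IsOpen {y | N y < r} := isOpen_lt (N_cont hN) continuous_const
  have h := ho.measure_pos volume ⟨0, by simpa [N_zero hN] using hr⟩
  exact (h.trans_le (measure_mono fun x (hx : N x < r) => hx.le)).ne'

/-- Uniform probability measure on the ball of radius `r`. -/
def uni (N : EuclideanSpace ℝ (Fin n) → ℝ) (r : ℝ) : Measure (EuclideanSpace ℝ (Fin n)) :=
  (volume (KB N r))⁻¹ • volume.restrict (KB N r)

lemma uni_prob (hN : IsNorm N) {r : ℝ} (hr : 0 < r) : IsProbabilityMeasure (uni N r) := by
  constructor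
  simp only [uni, Measure.smul_apply, Measure.restrict_apply_univ, smul_eq_mul]
  exact ENNReal.inv_mul_cancel (KB_vol_ne_zero hN hr) (KB_vol_ne_top hN r)

lemma lintegral_uni (r : ℝ) (g : EuclideanSpace ℝ (Fin n) → ℝ≥0∞) :
    ∫⁻ x, g x ∂(uni N r) = (volume (KB N r))⁻¹ * ∫⁻ x in KB N r, g x := by
  rw [uni, lintegral_smul_measure, smul_eq_mul]

lemma uni_ae (hN : IsNorm N) (r : ℝ) : ∀ᵐ x ∂(uni N r), N x ≤ r :=
  Measure.ae_smul_measure (ae_restrict_mem (KB_meas hN r)) _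

lemma uni_neg (hN : IsNorm N) (r : ℝ) : (uni N r).map (fun x => -x) = uni N r := by
  ext s hs
  rw [Measure.map_apply measurable_neg hs, uni, Measure.smul_apply, Measure.smul_apply,
    Measure.restrict_apply hs, Measure.restrict_apply (measurable_neg hs)]
  congr 1
  have : (fun x : EuclideanSpace ℝ (Fin n) => -x) ⁻¹' s ∩ KB N r = -(s ∩ KB N r) := by
    ext x
    simp [KB, N_neg hN]
  rw [this, Measure.measure_neg]

open Pointwise in
/-- Overlap of the unit ball with a small translate. -/
lemma KB_overlap (hN : IsNorm N) (hn : 0 < n) {u : EuclideanSpace ℝ (Fin n)}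
    (hu : N u ≤ 1 / n) :
    (1 / 2 : ℝ≥0∞) ≤ uni N 1 (KB N 1 ∩ {x | N (x - u) ≤ 1}) := by
  have hn' : (1 : ℝ) ≤ n := by exact_mod_cast hn
  set c : ℝ := 1 - 1 / (2 * n) with hc
  have hc0 : 0 ≤ c := by
    rw [hc, sub_nonneg, div_le_one (by positivity)]; linarith
  have hsub : (fun x => (2⁻¹ : ℝ) • u + x) '' (c • KB N 1) ⊆ KB N 1 ∩ {x | N (x - u) ≤ 1} := by
    rintro _ ⟨_, ⟨x, hx, rfl⟩, rfl⟩
    have hx' : N x ≤ 1 := hx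
    have e1 : N (c • x) ≤ c := by
      rw [N_smul hN hc0]; nlinarith
    have e2 : N ((2⁻¹ : ℝ) • u) ≤ 1 / (2 * n) := by
      rw [N_smul hN (by norm_num)]
      calc 2⁻¹ * N u ≤ 2⁻¹ * (1 / n) := by gcongr
        _ = _ := by field_simp
    constructor
    · change N ((2⁻¹ : ℝ) • u + c • x) ≤ 1
      have := hN.2.2 ((2⁻¹ : ℝ) • u) (c • x)
      linarith
    · change N ((2⁻¹ : ℝ) • u + c • x - u) ≤ 1
      have e : (2⁻¹ : ℝ) • u + c • x - u = -((2⁻¹ : ℝ) • u) + c • x := by module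
      rw [e]
      have := hN.2.2 (-((2⁻¹ : ℝ) • u)) (c • x)
      rw [N_neg hN] at this
      linarith
  have hb : (1 / 2 : ℝ) ≤ c ^ n := by
    have := one_add_mul_le_pow (a := -(1 / (2 * (n : ℝ)))) (by
      have : 1 / (2 * (n : ℝ)) ≤ 1 := by rw [div_le_one (by positivity)]; linarith
      linarith) n
    have e : 1 + (n : ℝ) * -(1 / (2 * n)) = 1 / 2 := by field_simp; norm_num
    rw [e] at this
    rw [hc, sub_eq_add_neg]; exact this
  have hv0 := KB_vol_ne_zero hN one_pos
  have hvt := KB_vol_ne_top hN 1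
  have hm : MeasurableSet (KB N 1 ∩ {x | N (x - u) ≤ 1}) :=
    (KB_meas hN 1).inter (isClosed_le ((N_cont hN).comp (by fun_prop)) continuous_const).measurableSet
  rw [uni, Measure.smul_apply, Measure.restrict_apply hm, smul_eq_mul]
  have h1 : volume (KB N 1 ∩ {x | N (x - u) ≤ 1} ∩ KB N 1) ≥ ENNReal.ofReal (1 / 2) * volume (KB N 1) := by
    calc ENNReal.ofReal (1 / 2) * volume (KB N 1) ≤ ENNReal.ofReal (c ^ n) * volume (KB N 1) := by
          gcongr
      _ = volume (c • KB N 1) := by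
          rw [Measure.addHaar_smul, finrank_euclideanSpace_fin, abs_of_nonneg (by positivity)]
      _ = volume ((fun x => (2⁻¹ : ℝ) • u + x) '' (c • KB N 1)) := by
          rw [image_add_left, measure_preimage_add]
      _ ≤ _ := by
          apply measure_mono
          intro x hx
          exact ⟨hsub hx, (hsub hx).1⟩
  calc (1 / 2 : ℝ≥0∞) = ENNReal.ofReal (1 / 2) * ((volume (KB N 1))⁻¹ * volume (KB N 1)) := by
        rw [ENNReal.inv_mul_cancel hv0 hvt, mul_one, ENNReal.ofReal_div_of_pos (by norm_num)]
        simp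
    _ = (volume (KB N 1))⁻¹ * (ENNReal.ofReal (1 / 2) * volume (KB N 1)) := by ring
    _ ≤ _ := by gcongr

end Norm
set_option linter.unusedSectionVars false
section Avg

variable {n : ℕ} {N : EuclideanSpace ℝ (Fin n) → ℝ}
variable {Z : Type*} [NormedAddCommGroup Z] [NormedSpace ℝ Z]

/-- Bounded continuous. -/
structure BC (F : EuclideanSpace ℝ (Fin n) → Z) (C : ℝ) : Prop where
  cont : Continuous F
  bd : ∀ x, ‖F x‖ ≤ C

/-- Iterated averages. -/
def PP (N : EuclideanSpace ℝ (Fin n) → ℝ) (a : ℕ → ℝ) :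
    ℕ → (EuclideanSpace ℝ (Fin n) → Z) → EuclideanSpace ℝ (Fin n) → Z
  | 0, F => F
  | i + 1, F => fun x => ∫ ξ, PP N a i F (x + a i • ξ) ∂(uni N 1)

lemma PP_zero (a : ℕ → ℝ) (F : EuclideanSpace ℝ (Fin n) → Z) : PP N a 0 F = F := rfl

lemma PP_succ (a : ℕ → ℝ) (i : ℕ) (F : EuclideanSpace ℝ (Fin n) → Z) (x) :
    PP N a (i + 1) F x = ∫ ξ, PP N a i F (x + a i • ξ) ∂(uni N 1) := rfl

lemma BC.integrable {F : EuclideanSpace ℝ (Fin n) → Z} {C : ℝ} (h : BC F C)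
    {α : Type*} [TopologicalSpace α] [MeasurableSpace α] [OpensMeasurableSpace α]
    [SecondCountableTopology α]
    {g : α → EuclideanSpace ℝ (Fin n)} (hg : Continuous g) (μ : Measure α) [IsFiniteMeasure μ] :
    Integrable (fun a => F (g a)) μ := by
  refine Integrable.of_bound (C := C) ?_ (ae_of_all _ fun a => h.bd _)
  exact (h.cont.comp hg).aestronglyMeasurable

lemma BC.avg (hN : IsNorm N) {F : EuclideanSpace ℝ (Fin n) → Z} {C : ℝ} (h : BC F C) (a : ℝ) :
    BC (fun x => ∫ ξ, F (x + a • ξ) ∂(uni N 1)) C := by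
  have := uni_prob hN one_pos
  constructor
  · refine continuous_of_dominated (bound := fun _ => C) (fun x => ?_) (fun x => ?_)
      (integrable_const _) ?_
    · exact (h.cont.comp (by fun_prop)).aestronglyMeasurable
    · exact ae_of_all _ fun a => h.bd _
    · exact ae_of_all _ fun ξ => h.cont.comp (by fun_prop)
  · intro x
    refine (norm_integral_le_of_norm_le_const (ae_of_all _ fun ξ => h.bd _)).trans ?_
    simp

lemma BC.PP (hN : IsNorm N) {F : EuclideanSpace ℝ (Fin n) → Z} {C : ℝ} (h : BC F C) (a : ℕ → ℝ)
    (i : ℕ) : BC (PP N a i F) C := by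
  induction i with
  | zero => exact h
  | succ i ih => exact ih.avg hN (a i)

lemma lintegral_avg (hN : IsNorm N) {g : EuclideanSpace ℝ (Fin n) → ℝ≥0∞} (hg : Measurable g)
    (a : ℝ) :
    ∫⁻ x, ∫⁻ ξ, g (x + a • ξ) ∂(uni N 1) = ∫⁻ x, g x := by
  have := uni_prob hN one_pos
  rw [lintegral_lintegral_swap]
  · simp_rw [lintegral_add_right_eq_self g]
    simp
  · exact (hg.comp (by fun_prop)).aemeasurable

lemma PP_lq (hN : IsNorm N) {F : EuclideanSpace ℝ (Fin n) → Z} {C : ℝ} (h : BC F C) (a : ℕ → ℝ)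
    {q : ℝ} (hq : 1 ≤ q) (i : ℕ) :
    ∫⁻ x, ‖PP N a i F x‖ₑ ^ q ≤ ∫⁻ x, ‖F x‖ₑ ^ q := by
  have := uni_prob hN one_pos
  induction i with
  | zero => exact le_rfl
  | succ i ih =>
    refine le_trans ?_ ih
    have hc := (h.PP hN a i).cont
    rw [← lintegral_avg hN (g := fun x => ‖Dorr.PP N a i F x‖ₑ ^ q)
      ((hc.enorm.measurable).pow_const q) (a i)]
    refine lintegral_mono fun x => ?_
    exact enorm_integral_rpow_le _ ((hc.comp (by fun_prop)).aestronglyMeasurable) hq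

end Avg

section Mart

variable {n : ℕ} {N : EuclideanSpace ℝ (Fin n) → ℝ}
variable {Y : Type u} [NormedAddCommGroup Y] [NormedSpace ℝ Y] [CompleteSpace Y]

/-- The driving measure. -/
def drv (N : EuclideanSpace ℝ (Fin n) → ℝ) (R : ℝ) : Measure (ℕ → EuclideanSpace ℝ (Fin n)) :=
  Measure.infinitePi (fun i => uni N (if i = 0 then R else 1))

/-- The walk. -/
def wlk (b : ℕ → ℝ) (j : ℕ) (ω : ℕ → EuclideanSpace ℝ (Fin n)) : EuclideanSpace ℝ (Fin n) :=
  ω 0 + ∑ l ∈ Finset.range j, b l • ω (l + 1)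

lemma wlk_succ (b : ℕ → ℝ) (j : ℕ) (ω : ℕ → EuclideanSpace ℝ (Fin n)) :
    wlk b (j + 1) ω = wlk b j ω + b j • ω (j + 1) := by
  simp [wlk, Finset.sum_range_succ, add_assoc]

lemma wlk_cont (b : ℕ → ℝ) (j : ℕ) : Continuous (wlk (n := n) b j) := by
  unfold wlk; fun_prop

/-- extension by zero -/
def ext0 (j : ℕ) (u : Finset.Iic j → EuclideanSpace ℝ (Fin n)) : ℕ → EuclideanSpace ℝ (Fin n) :=
  fun i => if h : i ∈ Finset.Iic j then u ⟨i, h⟩ else 0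

lemma ext0_meas (j : ℕ) : Measurable (ext0 (n := n) j) := by
  refine measurable_pi_lambda _ fun i => ?_
  by_cases h : i ∈ Finset.Iic j
  · simp only [ext0, h, dite_true]; exact measurable_pi_apply _
  · simp only [ext0, h, dite_false]; exact measurable_const

lemma wlk_ext0 (b : ℕ → ℝ) (j : ℕ) (ω : ℕ → EuclideanSpace ℝ (Fin n)) :
    wlk b j (ext0 j (Preorder.frestrictLe j ω)) = wlk b j ω := by
  unfold wlk
  have h : ∀ i, i ≤ j → ext0 j (Preorder.frestrictLe j ω) i = ω i := by
    intro i hi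
    simp [ext0, hi]
  rw [h 0 (Nat.zero_le _)]
  congr 1
  refine Finset.sum_congr rfl fun l hl => ?_
  rw [h (l + 1) (by have := Finset.mem_range.1 hl; omega)]

lemma uni_ite_prob (hN : IsNorm N) {R : ℝ} (hR : 0 < R) (i : ℕ) :
    IsProbabilityMeasure (uni N (if i = 0 then R else 1)) := by
  split_ifs
  · exact uni_prob hN hR
  · exact uni_prob hN one_pos

lemma drv_prob (hN : IsNorm N) {R : ℝ} (hR : 0 < R) : IsProbabilityMeasure (drv N R) := by
  have := uni_ite_prob hN hR
  unfold drv; infer_instance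

lemma drv_map (hN : IsNorm N) {R : ℝ} (hR : 0 < R) (j : ℕ) :
    (drv N R).map (fun ω => (Preorder.frestrictLe (π := fun _ => EuclideanSpace ℝ (Fin n)) j ω,
      ω (j + 1)))
      = ((drv N R).map (Preorder.frestrictLe j)).prod (uni N 1) := by
  have := uni_ite_prob hN hR
  have := drv_prob hN hR
  have hI := ProbabilityTheory.iIndepFun_infinitePi
    (P := fun i => uni N (if i = 0 then R else 1)) (X := fun _ x => x) (fun i => measurable_id)
  have h2 := hI.indepFun_finset (Finset.Iic j) {j + 1} (by simp) (fun i => measurable_pi_apply i)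
  have h3 : ProbabilityTheory.IndepFun
      (Preorder.frestrictLe (π := fun _ => EuclideanSpace ℝ (Fin n)) j)
      (fun ω => ω (j + 1)) (drv N R) := h2.comp (φ := id) (_mγ' := inferInstance)
    (ψ := fun v : (({j + 1} : Finset ℕ) → EuclideanSpace ℝ (Fin n)) => v ⟨j + 1, by simp⟩)
    measurable_id (by exact measurable_pi_apply _)
  have h4 := (ProbabilityTheory.indepFun_iff_map_prod_eq_prod_map_map
    (by exact (Preorder.measurable_frestrictLe j).aemeasurable)
    (by exact (measurable_pi_apply (j + 1)).aemeasurable)).1 h3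
  have h5 := Measure.infinitePi_map_eval (fun i => uni N (if i = 0 then R else 1)) (j + 1)
  have h6 : (drv N R).map (fun ω => ω (j + 1)) = uni N 1 := by
    rw [drv, h5]; simp
  rw [← h6]
  exact h4

lemma lintegral_wlk (hN : IsNorm N) {R : ℝ} (hR : 0 < R) (b : ℕ → ℝ) (j : ℕ)
    {G : EuclideanSpace ℝ (Fin n) × EuclideanSpace ℝ (Fin n) → ℝ≥0∞} (hG : Measurable G) :
    ∫⁻ ω, G (wlk b j ω, ω (j + 1)) ∂(drv N R)
      = ∫⁻ ω, ∫⁻ ξ, G (wlk b j ω, ξ) ∂(uni N 1) ∂(drv N R) := by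
  have := uni_prob hN one_pos
  have := drv_prob hN hR
  have hw : Measurable (fun u => wlk b j (ext0 (n := n) j u)) :=
    (wlk_cont b j).measurable.comp (ext0_meas j)
  have hG' : Measurable (fun p : (Finset.Iic j → EuclideanSpace ℝ (Fin n)) ×
      EuclideanSpace ℝ (Fin n) => G (wlk b j (ext0 j p.1), p.2)) :=
    hG.comp ((hw.comp measurable_fst).prodMk measurable_snd)
  have hmp : Measurable (fun ω : ℕ → EuclideanSpace ℝ (Fin n) =>
      (Preorder.frestrictLe (π := fun _ => EuclideanSpace ℝ (Fin n)) j ω, ω (j + 1))) :=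
    (Preorder.measurable_frestrictLe j).prodMk (measurable_pi_apply _)
  have h := lintegral_map (μ := drv N R) hG' hmp
  rw [drv_map hN hR, lintegral_prod _ hG'.aemeasurable,
    lintegral_map (hG'.lintegral_prod_right') (Preorder.measurable_frestrictLe j)] at h
  simp only [wlk_ext0] at h
  exact h.symm

lemma setIntegral_wlk (hN : IsNorm N) {R : ℝ} (hR : 0 < R) (b : ℕ → ℝ) (j : ℕ)
    {F : EuclideanSpace ℝ (Fin n) → Y} {C : ℝ} (hF : BC F C)
    (s : Set (ℕ → EuclideanSpace ℝ (Fin n)))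
    (hs : MeasurableSet[Filtration.piLE (X := fun _ => EuclideanSpace ℝ (Fin n)) j] s) :
    ∫ ω in s, (∫ ξ, F (wlk b j ω + b j • ξ) ∂(uni N 1)) ∂(drv N R)
      = ∫ ω in s, F (wlk b (j + 1) ω) ∂(drv N R) := by
  have := uni_prob hN one_pos
  have := drv_prob hN hR
  have hms := (Filtration.piLE (X := fun _ => EuclideanSpace ℝ (Fin n))).le j s hs
  rw [Filtration.piLE_eq_comap_frestrictLe] at hs
  obtain ⟨s', hs', rfl⟩ := hs
  have hfr : Measurable (Preorder.frestrictLe (π := fun _ => EuclideanSpace ℝ (Fin n)) j) :=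
    Preorder.measurable_frestrictLe j
  have hmp : Measurable (fun ω : ℕ → EuclideanSpace ℝ (Fin n) =>
      (Preorder.frestrictLe (π := fun _ => EuclideanSpace ℝ (Fin n)) j ω, ω (j + 1))) :=
    (Preorder.measurable_frestrictLe j).prodMk (measurable_pi_apply _)
  have : IsProbabilityMeasure ((drv N R).map
      (Preorder.frestrictLe (π := fun _ => EuclideanSpace ℝ (Fin n)) j)) :=
    Measure.isProbabilityMeasure_map hfr.aemeasurable
  set G : (Finset.Iic j → EuclideanSpace ℝ (Fin n)) × EuclideanSpace ℝ (Fin n) → Y :=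
    fun p => F (wlk b j (ext0 j p.1) + b j • p.2) with hGdef
  have hGm : StronglyMeasurable G := by
    refine hF.cont.stronglyMeasurable.comp_measurable ?_
    refine Measurable.add (((wlk_cont b j).measurable.comp (ext0_meas j)).comp measurable_fst)
      (measurable_snd.const_smul (b j))
  have hGi : ∀ (μ : Measure ((Finset.Iic j → EuclideanSpace ℝ (Fin n)) × EuclideanSpace ℝ (Fin n)))
      [IsFiniteMeasure μ], Integrable G μ := fun μ _ =>
    Integrable.of_bound hGm.aestronglyMeasurable C (ae_of_all _ fun p => hF.bd _)
  have h1 : ∫ ω in (Preorder.frestrictLe j) ⁻¹' s', F (wlk b (j + 1) ω) ∂(drv N R)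
      = ∫ p in s' ×ˢ univ, G p ∂((drv N R).map (fun ω =>
        (Preorder.frestrictLe (π := fun _ => EuclideanSpace ℝ (Fin n)) j ω, ω (j + 1)))) := by
    rw [setIntegral_map (hs'.prod MeasurableSet.univ) hGm.aestronglyMeasurable hmp.aemeasurable]
    have : (fun ω => (Preorder.frestrictLe (π := fun _ => EuclideanSpace ℝ (Fin n)) j ω,
        ω (j + 1))) ⁻¹' (s' ×ˢ univ) = (Preorder.frestrictLe j) ⁻¹' s' := by
      ext; simp
    rw [this]
    simp only [hGdef, wlk_ext0, wlk_succ]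
  rw [h1, drv_map hN hR, setIntegral_prod _ (hGi _).integrableOn,
    setIntegral_map hs' _ hfr.aemeasurable]
  · simp only [hGdef, wlk_ext0, Measure.restrict_univ]
  · exact (hGm.integral_prod_right').aestronglyMeasurable

lemma wlk_martingale (hN : IsNorm N) {R : ℝ} (hR : 0 < R) (b : ℕ → ℝ)
    (h : ℕ → EuclideanSpace ℝ (Fin n) → Y) {C : ℝ} (hBC : ∀ j, BC (h j) C)
    (hrec : ∀ j x, h j x = ∫ ξ, h (j + 1) (x + b j • ξ) ∂(uni N 1)) :
    Martingale (fun j ω => h j (wlk b j ω))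
      (Filtration.piLE (X := fun _ => EuclideanSpace ℝ (Fin n))) (drv N R) := by
  have := drv_prob hN hR
  have hinteg : ∀ j, Integrable (fun ω => h j (wlk b j ω)) (drv N R) := fun j =>
    Integrable.of_bound ((hBC j).cont.stronglyMeasurable.comp_measurable
      (wlk_cont b j).measurable).aestronglyMeasurable C (ae_of_all _ fun ω => (hBC j).bd _)
  have had : ∀ j, StronglyMeasurable[Filtration.piLE (X := fun _ => EuclideanSpace ℝ (Fin n)) j]
      (fun ω => h j (wlk b j ω)) := by
    intro j
    rw [Filtration.piLE_eq_comap_frestrictLe]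
    have : (fun ω => h j (wlk b j ω)) = (fun u => h j (wlk b j (ext0 j u))) ∘
        (Preorder.frestrictLe (π := fun _ => EuclideanSpace ℝ (Fin n)) j) := by
      funext ω; simp only [Function.comp, wlk_ext0]
    rw [this]
    refine StronglyMeasurable.comp_measurable ?_ (comap_measurable _)
    exact (hBC j).cont.stronglyMeasurable.comp_measurable
      ((wlk_cont b j).measurable.comp (ext0_meas j))
  refine martingale_nat had hinteg fun j => ?_
  refine ae_eq_condExp_of_forall_setIntegral_eq (Filtration.le _ j) (hinteg (j + 1))
    (fun s _ _ => (hinteg j).integrableOn) (fun s hs _ => ?_) (had j).aestronglyMeasurable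
  rw [← setIntegral_wlk hN hR b j (hBC (j + 1)) s hs]
  simp only [← hrec]

end Mart

section Mart2

variable {n : ℕ} {N : EuclideanSpace ℝ (Fin n) → ℝ}
variable {Y : Type u} [NormedAddCommGroup Y] [NormedSpace ℝ Y] [CompleteSpace Y]

lemma drv_zero (hN : IsNorm N) {R : ℝ} (hR : 0 < R) {g : EuclideanSpace ℝ (Fin n) → ℝ≥0∞}
    (hg : Measurable g) : ∫⁻ ω, g (ω 0) ∂(drv N R) = (volume (KB N R))⁻¹ * ∫⁻ x in KB N R, g x := by
  have := uni_ite_prob hN hR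
  have h5 := Measure.infinitePi_map_eval (fun i => uni N (if i = 0 then R else 1)) 0
  simp only [if_true] at h5
  rw [← lintegral_uni, ← h5, lintegral_map hg (measurable_pi_apply 0)]
  rfl

lemma wlk_upper (hN : IsNorm N) {R : ℝ} (hR : 0 < R) (b : ℕ → ℝ) (j : ℕ) :
    ∀ {g : EuclideanSpace ℝ (Fin n) → ℝ≥0∞}, Measurable g →
    ∫⁻ ω, g (wlk b j ω) ∂(drv N R) ≤ (volume (KB N R))⁻¹ * ∫⁻ x, g x := by
  have := uni_prob hN one_pos
  induction j with
  | zero =>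
    intro g hg
    simp only [wlk, Finset.range_zero, Finset.sum_empty, add_zero]
    rw [drv_zero hN hR hg]
    gcongr
    exact Measure.restrict_le_self
  | succ j ih =>
    intro g hg
    simp only [wlk_succ]
    have hm : Measurable (fun p : EuclideanSpace ℝ (Fin n) × EuclideanSpace ℝ (Fin n) =>
      g (p.1 + b j • p.2)) := hg.comp (by fun_prop)
    rw [lintegral_wlk hN hR b j (G := fun p => g (p.1 + b j • p.2)) hm]
    refine (ih (g := fun x => ∫⁻ ξ, g (x + b j • ξ) ∂(uni N 1)) hm.lintegral_prod_right').trans ?_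
    rw [lintegral_avg hN hg]

lemma wlk_lower (hN : IsNorm N) {R : ℝ} (hR : 0 < R) (b : ℕ → ℝ) (hb : ∀ j, 0 ≤ b j) (j : ℕ) :
    ∀ {g : EuclideanSpace ℝ (Fin n) → ℝ≥0∞}, Measurable g →
    (volume (KB N R))⁻¹ * ∫⁻ x in KB N (R - ∑ l ∈ Finset.range j, b l), g x
      ≤ ∫⁻ ω, g (wlk b j ω) ∂(drv N R) := by
  have := uni_prob hN one_pos
  induction j with
  | zero =>
    intro g hg
    simp only [wlk, Finset.range_zero, Finset.sum_empty, add_zero, sub_zero]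
    rw [drv_zero hN hR hg]
  | succ j ih =>
    intro g hg
    simp only [wlk_succ]
    have hm : Measurable (fun p : EuclideanSpace ℝ (Fin n) × EuclideanSpace ℝ (Fin n) =>
      g (p.1 + b j • p.2)) := hg.comp (by fun_prop)
    rw [lintegral_wlk hN hR b j (G := fun p => g (p.1 + b j • p.2)) hm]
    refine le_trans ?_ (ih (g := fun x => ∫⁻ ξ, g (x + b j • ξ) ∂(uni N 1))
      hm.lintegral_prod_right')
    refine mul_le_mul_right ?_ _
    rw [lintegral_lintegral_swap (f := fun x ξ => g (x + b j • ξ)) hm.aemeasurable]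
    set S := R - ∑ l ∈ Finset.range j, b l with hS
    set S' := R - ∑ l ∈ Finset.range (j + 1), b l with hS'
    have hSS : S' + b j = S := by rw [hS, hS', Finset.sum_range_succ]; ring
    calc ∫⁻ x in KB N S', g x = ∫⁻ ξ, (∫⁻ x in KB N S', g x) ∂(uni N 1) := by simp
      _ ≤ _ := by
        refine lintegral_mono_ae ?_
        filter_upwards [uni_ae hN 1] with ξ hξ
        rw [← lintegral_indicator (KB_meas hN _), ← lintegral_indicator (KB_meas hN _),
          ← lintegral_add_right_eq_self _ (b j • ξ)]
        refine lintegral_mono fun x => ?_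
        by_cases hx : x + b j • ξ ∈ KB N S'
        · have hx' : x ∈ KB N S := by
            have e : x = (x + b j • ξ) + -(b j • ξ) := by abel
            have h1 : N x ≤ N (x + b j • ξ) + N (-(b j • ξ)) := by
              conv_lhs => rw [e]
              exact hN.2.2 _ _
            rw [N_neg hN, N_smul hN (hb j)] at h1
            have h2 : N (x + b j • ξ) ≤ S' := hx
            have h3 : b j * N ξ ≤ b j := mul_le_of_le_one_right (hb j) hξ
            change N x ≤ S
            linarith
          rw [indicator_of_mem hx, indicator_of_mem hx']
        · rw [indicator_of_notMem hx]; exact zero_le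

lemma mart_R (hN : IsNorm N) {q : ℝ} {m : ℝ} (hq : 1 ≤ q) (hm : MartCotypeBound q Y m)
    {R : ℝ} (hR : 0 < R) (b : ℕ → ℝ) (hb : ∀ j, 0 ≤ b j)
    (h : ℕ → EuclideanSpace ℝ (Fin n) → Y) {C : ℝ} (hBC : ∀ j, BC (h j) C)
    (hrec : ∀ j x, h j x = ∫ ξ, h (j + 1) (x + b j • ξ) ∂(uni N 1))
    (V : ℝ≥0∞) (hV : ∀ j, ∫⁻ x, ‖h j x‖ₑ ^ q ≤ V) (J : ℕ) :
    ∑ j ∈ Finset.range J, ∫⁻ x in KB N (R - ∑ l ∈ Finset.range J, b l),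
      ∫⁻ ξ, ‖h (j + 1) (x + b j • ξ) - h j x‖ₑ ^ q ∂(uni N 1) ≤ ENNReal.ofReal m ^ q * V := by
  have := uni_prob hN one_pos
  have := drv_prob hN hR
  have hv0 := KB_vol_ne_zero hN hR
  have hvt := KB_vol_ne_top hN R
  set v := volume (KB N R) with hv
  have hB : ∀ k, ∫⁻ ω, (‖h k (wlk b k ω)‖₊ : ℝ≥0∞) ^ q ∂(drv N R) ≤ v⁻¹ * V := by
    intro k
    refine (wlk_upper hN hR b k (g := fun x => ‖h k x‖ₑ ^ q)
      ((hBC k).cont.enorm.measurable.pow_const q)).trans ?_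
    gcongr
    exact hV k
  have key := hm (ℕ → EuclideanSpace ℝ (Fin n)) (drv N R) _ _
    (wlk_martingale hN hR b h hBC hrec) (v⁻¹ * V) hB
  have key2 := (ENNReal.sum_le_tsum (Finset.range J)).trans key
  have hterm : ∀ j ∈ Finset.range J, v⁻¹ * ∫⁻ x in KB N (R - ∑ l ∈ Finset.range J, b l),
      ∫⁻ ξ, ‖h (j + 1) (x + b j • ξ) - h j x‖ₑ ^ q ∂(uni N 1)
      ≤ ∫⁻ ω, (‖h (j + 1) (wlk b (j + 1) ω) - h j (wlk b j ω)‖₊ : ℝ≥0∞) ^ q ∂(drv N R) := by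
    intro j hj
    have hG : Measurable (fun p : EuclideanSpace ℝ (Fin n) × EuclideanSpace ℝ (Fin n) =>
        ‖h (j + 1) (p.1 + b j • p.2) - h j p.1‖ₑ ^ q) := by
      refine Measurable.pow_const ?_ q
      have h1 := (hBC (j + 1)).cont
      have h2 := (hBC j).cont
      exact (Continuous.enorm (by fun_prop)).measurable
    have e := lintegral_wlk hN hR b j hG
    simp only [wlk_succ]
    refine le_trans ?_ e.symm.le
    refine le_trans ?_ (wlk_lower hN hR b hb j
      (g := fun x => ∫⁻ ξ, ‖h (j + 1) (x + b j • ξ) - h j x‖ₑ ^ q ∂(uni N 1))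
      hG.lintegral_prod_right')
    gcongr
    intro x (hx : N x ≤ _)
    have : ∑ l ∈ Finset.range j, b l ≤ ∑ l ∈ Finset.range J, b l :=
      Finset.sum_le_sum_of_subset_of_nonneg
        (Finset.range_subset_range.2 (Finset.mem_range.1 hj).le) fun i _ _ => hb i
    change N x ≤ _
    linarith
  have key3 := (Finset.sum_le_sum hterm).trans key2
  rw [← Finset.mul_sum] at key3
  calc _ = v * (v⁻¹ * ∑ j ∈ Finset.range J, ∫⁻ x in KB N (R - ∑ l ∈ Finset.range J, b l),
      ∫⁻ ξ, ‖h (j + 1) (x + b j • ξ) - h j x‖ₑ ^ q ∂(uni N 1)) := by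
        rw [← mul_assoc, ENNReal.mul_inv_cancel hv0 hvt, one_mul]
    _ ≤ v * (ENNReal.ofReal m ^ q * (v⁻¹ * V)) := by gcongr
    _ = (v * v⁻¹) * (ENNReal.ofReal m ^ q * V) := by ring
    _ = _ := by rw [ENNReal.mul_inv_cancel hv0 hvt, one_mul]

lemma lintegral_exhaust (hN : IsNorm N) (g : EuclideanSpace ℝ (Fin n) → ℝ≥0∞) :
    ∫⁻ x, g x = ⨆ k : ℕ, ∫⁻ x in KB N k, g x := by
  have hU : ⋃ k : ℕ, KB N k = univ := by
    refine eq_univ_of_forall fun x => ?_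
    obtain ⟨k, hk⟩ := exists_nat_ge (N x)
    exact mem_iUnion.2 ⟨k, hk⟩
  have hmono : Monotone fun k : ℕ => KB N (k : ℝ) := by
    intro i j hij x (hx : N x ≤ i)
    have : (i : ℝ) ≤ j := by exact_mod_cast hij
    exact hx.trans this
  rw [← setLIntegral_iUnion_of_directed g hmono.directed_le, hU, Measure.restrict_univ]

lemma mart_core (hN : IsNorm N) {q : ℝ} {m : ℝ} (hq : 1 ≤ q) (hm : MartCotypeBound q Y m)
    (b : ℕ → ℝ) (hb : ∀ j, 0 ≤ b j)
    (h : ℕ → EuclideanSpace ℝ (Fin n) → Y) {C : ℝ} (hBC : ∀ j, BC (h j) C)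
    (hrec : ∀ j x, h j x = ∫ ξ, h (j + 1) (x + b j • ξ) ∂(uni N 1))
    (V : ℝ≥0∞) (hV : ∀ j, ∫⁻ x, ‖h j x‖ₑ ^ q ≤ V) (J : ℕ) :
    ∑ j ∈ Finset.range J, ∫⁻ x,
      ∫⁻ ξ, ‖h (j + 1) (x + b j • ξ) - h j x‖ₑ ^ q ∂(uni N 1) ≤ ENNReal.ofReal m ^ q * V := by
  simp_rw [lintegral_exhaust hN]
  rw [ENNReal.finsetSum_iSup_of_monotone]
  · refine iSup_le fun k => ?_
    have hS : 0 ≤ ∑ l ∈ Finset.range J, b l := Finset.sum_nonneg fun i _ => hb i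
    have := mart_R hN hq hm (R := k + 1 + ∑ l ∈ Finset.range J, b l) (by positivity) b hb h hBC hrec
      V hV J
    refine le_trans ?_ this
    gcongr
    intro x (hx : N x ≤ _)
    change N x ≤ _
    linarith
  · intro j i k hik
    refine lintegral_mono' (Measure.restrict_mono (fun x (hx : N x ≤ _) => ?_) le_rfl) le_rfl
    have : (i : ℝ) ≤ k := by exact_mod_cast hik
    exact hx.trans this

/-- The martingale inequality for iterated averages. -/
lemma mart_PP (hN : IsNorm N) {q : ℝ} {m : ℝ} (hq : 1 ≤ q) (hm : MartCotypeBound q Y m)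
    (a : ℕ → ℝ) (ha : ∀ j, 0 ≤ a j) {F : EuclideanSpace ℝ (Fin n) → Y} {C : ℝ} (hF : BC F C)
    (J : ℕ) :
    ∑ j ∈ Finset.range J, ∫⁻ x,
      ∫⁻ ξ, ‖PP N a j F (x + a j • ξ) - PP N a (j + 1) F x‖ₑ ^ q ∂(uni N 1)
      ≤ ENNReal.ofReal m ^ q * ∫⁻ x, ‖F x‖ₑ ^ q := by
  have := uni_prob hN one_pos
  have key := mart_core hN hq hm (b := fun j => if j < J then a (J - 1 - j) else 0)
    (fun j => by split_ifs; exacts [ha _, le_rfl])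
    (fun j => PP N a (J - j) F) (fun j => hF.PP hN a _) (fun j x => ?_)
    (∫⁻ x, ‖F x‖ₑ ^ q) (fun j => PP_lq hN hF a hq _) J
  · rw [← Finset.sum_range_reflect] at key
    refine le_trans (le_of_eq (Finset.sum_congr rfl fun j hj => ?_)) key
    have hj' := Finset.mem_range.1 hj
    have e1 : J - (J - 1 - j + 1) = j := by omega
    have e2 : J - (J - 1 - j) = j + 1 := by omega
    have e3 : J - 1 - (J - 1 - j) = j := by omega
    have e4 : J - 1 - j < J := by omega
    simp only [e1, e2, e3, e4, if_true]
  · by_cases hj : j < J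
    · have e1 : J - j = (J - (j + 1)) + 1 := by omega
      have e2 : J - 1 - j = J - (j + 1) := by omega
      simp only [hj, if_true, e2]
      rw [e1, PP_succ]
    · have e1 : J - j = 0 := by omega
      have e2 : J - (j + 1) = 0 := by omega
      simp [hj, e1, e2]

end Mart2

section Shift

variable {n : ℕ} {N : EuclideanSpace ℝ (Fin n) → ℝ}
variable {Z : Type*} [NormedAddCommGroup Z] [NormedSpace ℝ Z]

/-- The martingale difference quantity. -/
def dd (N : EuclideanSpace ℝ (Fin n) → ℝ) (a : ℕ → ℝ) (q : ℝ) (F : EuclideanSpace ℝ (Fin n) → Z)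
    (j : ℕ) : ℝ≥0∞ :=
  ∫⁻ x, ∫⁻ ξ, ‖PP N a j F (x + a j • ξ) - PP N a (j + 1) F x‖ₑ ^ q ∂(uni N 1)

/-- The shift quantity. -/
def sh (q : ℝ) (G : EuclideanSpace ℝ (Fin n) → Z) (u : EuclideanSpace ℝ (Fin n)) : ℝ≥0∞ :=
  ∫⁻ x, ‖G (x + u) - G x‖ₑ ^ q

lemma four_le_A {q : ℝ} (hq : 2 ≤ q) : (4 : ℝ≥0∞) ≤ 2 ^ q := by
  calc (4 : ℝ≥0∞) = 2 ^ (2 : ℝ) := by norm_num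
    _ ≤ 2 ^ q := ENNReal.rpow_le_rpow_of_exponent_le (by norm_num) hq

lemma four_rpow {q : ℝ} (hq : 0 ≤ q) : (4 : ℝ≥0∞) ^ q = 2 ^ q * 2 ^ q := by
  rw [← ENNReal.mul_rpow_of_nonneg _ _ hq]; norm_num

lemma sh_step_gen (hN : IsNorm N) {G H : EuclideanSpace ℝ (Fin n) → Z} (hG : Continuous G)
    (hH : Continuous H) (c : ℝ) {q : ℝ} (hq : 2 ≤ q) (u : EuclideanSpace ℝ (Fin n)) :
    sh q G u ≤ 4 ^ q * (2 * (∫⁻ x, ∫⁻ ξ, ‖G (x + c • ξ) - H x‖ₑ ^ q ∂(uni N 1)) + sh q H u) := by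
  have := uni_prob hN one_pos
  have hq0 : 0 ≤ q := by linarith
  unfold sh
  rw [← lintegral_avg hN (g := fun x => ‖G (x + u) - G x‖ₑ ^ q)
    ((Continuous.enorm (by fun_prop)).measurable.pow_const q) c]
  have hd : Measurable (fun p : EuclideanSpace ℝ (Fin n) × EuclideanSpace ℝ (Fin n) =>
      ‖G (p.1 + c • p.2) - H p.1‖ₑ ^ q) :=
    (Continuous.enorm (by fun_prop)).measurable.pow_const q
  have hd1 : Measurable (fun x => ∫⁻ ξ, ‖G (x + c • ξ) - H x‖ₑ ^ q ∂(uni N 1)) :=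
    hd.lintegral_prod_right'
  calc ∫⁻ x, ∫⁻ ξ, ‖G (x + c • ξ + u) - G (x + c • ξ)‖ₑ ^ q ∂(uni N 1)
      ≤ ∫⁻ x, ∫⁻ ξ, 4 ^ q * (‖G ((x + u) + c • ξ) - H (x + u)‖ₑ ^ q + ‖H (x + u) - H x‖ₑ ^ q
          + ‖G (x + c • ξ) - H x‖ₑ ^ q) ∂(uni N 1) := by
        refine lintegral_mono fun x => lintegral_mono fun ξ => ?_
        refine le_trans (ENNReal.rpow_le_rpow ?_ hq0) (add3_rpow_le' _ _ _ hq0)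
        have e : G (x + c • ξ + u) - G (x + c • ξ) = (G ((x + u) + c • ξ) - H (x + u))
            + (H (x + u) - H x) - (G (x + c • ξ) - H x) := by
          rw [show x + c • ξ + u = (x + u) + c • ξ by abel]; abel
        rw [e]
        refine (enorm_sub_le).trans ?_
        gcongr
        exact enorm_add_le _ _
    _ = ∫⁻ x, 4 ^ q * ((∫⁻ ξ, ‖G ((x + u) + c • ξ) - H (x + u)‖ₑ ^ q ∂(uni N 1))
          + ‖H (x + u) - H x‖ₑ ^ q + ∫⁻ ξ, ‖G (x + c • ξ) - H x‖ₑ ^ q ∂(uni N 1)) := by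
        refine lintegral_congr fun x => ?_
        have m1 : ∀ x, Measurable (fun ξ => ‖G (x + c • ξ) - H x‖ₑ ^ q) := fun x =>
          hd.comp measurable_prodMk_left
        rw [lintegral_const_mul, lintegral_add_right _ (m1 x), lintegral_add_right _ measurable_const]
        · simp
        · exact ((m1 (x + u)).add measurable_const).add (m1 x)
    _ = 4 ^ q * ((∫⁻ x, ∫⁻ ξ, ‖G ((x + u) + c • ξ) - H (x + u)‖ₑ ^ q ∂(uni N 1))
          + (∫⁻ x, ‖H (x + u) - H x‖ₑ ^ q)
          + ∫⁻ x, ∫⁻ ξ, ‖G (x + c • ξ) - H x‖ₑ ^ q ∂(uni N 1)) := by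
        have m2 : Measurable (fun x => ‖H (x + u) - H x‖ₑ ^ q) :=
          (Continuous.enorm (by fun_prop)).measurable.pow_const q
        have m3 : Measurable (fun x => ∫⁻ ξ, ‖G (x + u + c • ξ) - H (x + u)‖ₑ ^ q ∂(uni N 1)) :=
          hd1.comp (measurable_add_const u)
        rw [lintegral_const_mul, lintegral_add_right _ hd1, lintegral_add_right _ m2]
        exact (m3.add m2).add hd1
    _ = _ := by
        rw [lintegral_add_right_eq_self
          (fun x => ∫⁻ ξ, ‖G (x + c • ξ) - H x‖ₑ ^ q ∂(uni N 1)) u]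
        ring

lemma sh_step (hN : IsNorm N) {F : EuclideanSpace ℝ (Fin n) → Z} {C : ℝ} (hF : BC F C) (a : ℕ → ℝ)
    {q : ℝ} (hq : 2 ≤ q) (j : ℕ) (u : EuclideanSpace ℝ (Fin n)) :
    sh q (PP N a j F) u ≤ 4 ^ q * (2 * dd N a q F j + sh q (PP N a (j + 1) F) u) :=
  sh_step_gen hN (hF.PP hN a j).cont (hF.PP hN a (j + 1)).cont (a j) hq u

lemma uni_shift (hN : IsNorm N) {g : EuclideanSpace ℝ (Fin n) → ℝ≥0∞}
    (u : EuclideanSpace ℝ (Fin n)) :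
    ∫⁻ ξ in KB N 1 ∩ {x | N (x - u) ≤ 1}, g (ξ - u) ∂(uni N 1) ≤ ∫⁻ ξ, g ξ ∂(uni N 1) := by
  have hm2 : MeasurableSet {x | N (x - u) ≤ 1} :=
    (isClosed_le ((N_cont hN).comp (by fun_prop)) continuous_const).measurableSet
  have hm : MeasurableSet (KB N 1 ∩ {x | N (x - u) ≤ 1}) := (KB_meas hN 1).inter hm2
  rw [lintegral_uni, uni, Measure.restrict_smul, lintegral_smul_measure, smul_eq_mul]
  refine mul_le_mul_right ?_ _
  rw [Measure.restrict_restrict hm]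
  calc ∫⁻ ξ in KB N 1 ∩ {x | N (x - u) ≤ 1} ∩ KB N 1, g (ξ - u)
      ≤ ∫⁻ ξ in {x | N (x - u) ≤ 1}, g (ξ - u) := by
        refine lintegral_mono' (Measure.restrict_mono (fun x hx => hx.1.2) le_rfl) le_rfl
    _ = ∫⁻ ξ, (KB N 1).indicator g (ξ - u) := by
        rw [← lintegral_indicator hm2]
        rfl
    _ = ∫⁻ ξ, (KB N 1).indicator g ξ := lintegral_sub_right_eq_self _ u
    _ = _ := lintegral_indicator (KB_meas hN 1) _

lemma sh_small_gen (hN : IsNorm N) (hn : 0 < n) {G H : EuclideanSpace ℝ (Fin n) → Z}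
    (hG : Continuous G) (hH : Continuous H) {c : ℝ} (ha : 0 < c) {q : ℝ} (hq : 2 ≤ q)
    (u : EuclideanSpace ℝ (Fin n)) (hu : N u ≤ c / n) :
    sh q H u ≤ 4 * 2 ^ q * (∫⁻ x, ∫⁻ ξ, ‖G (x + c • ξ) - H x‖ₑ ^ q ∂(uni N 1)) := by
  have := uni_prob hN one_pos
  have hq0 : 0 ≤ q := by linarith
  unfold sh
  set u' := c⁻¹ • u with hu'
  have hNu : N u' ≤ 1 / n := by
    rw [hu', N_smul hN (by positivity), inv_mul_le_iff₀ ha]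
    rw [mul_one_div]; exact hu
  set S := KB N 1 ∩ {x | N (x - u') ≤ 1} with hS
  have hov : (1 / 2 : ℝ≥0∞) ≤ uni N 1 S := KB_overlap hN hn hNu
  have hd : Measurable (fun p : EuclideanSpace ℝ (Fin n) × EuclideanSpace ℝ (Fin n) =>
      ‖G (p.1 + c • p.2) - H p.1‖ₑ ^ q) :=
    (Continuous.enorm (by fun_prop)).measurable.pow_const q
  have hd1 : Measurable (fun x => ∫⁻ ξ, ‖G (x + c • ξ) - H x‖ₑ ^ q ∂(uni N 1)) :=
    hd.lintegral_prod_right'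
  have m1 : ∀ x, Measurable (fun ξ => ‖G (x + c • ξ) - H x‖ₑ ^ q) := fun x =>
    hd.comp measurable_prodMk_left
  have hpt : ∀ x, ‖H (x + u) - H x‖ₑ ^ q ≤ 2 * 2 ^ q *
      ((∫⁻ ξ, ‖G ((x + u) + c • ξ) - H (x + u)‖ₑ ^ q ∂(uni N 1))
        + ∫⁻ ξ, ‖G (x + c • ξ) - H x‖ₑ ^ q ∂(uni N 1)) := by
    intro x
    have h1 : (1 / 2 : ℝ≥0∞) * ‖H (x + u) - H x‖ₑ ^ q ≤ 2 ^ q *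
      ((∫⁻ ξ, ‖G ((x + u) + c • ξ) - H (x + u)‖ₑ ^ q ∂(uni N 1))
        + ∫⁻ ξ, ‖G (x + c • ξ) - H x‖ₑ ^ q ∂(uni N 1)) := by
      calc (1 / 2 : ℝ≥0∞) * ‖H (x + u) - H x‖ₑ ^ q ≤ uni N 1 S * ‖H (x + u) - H x‖ₑ ^ q := by
            gcongr
        _ = ∫⁻ ξ in S, ‖H (x + u) - H x‖ₑ ^ q ∂(uni N 1) := by
            rw [setLIntegral_const, mul_comm]
        _ ≤ ∫⁻ ξ in S, 2 ^ q * (‖G ((x + u) + c • (ξ - u')) - H (x + u)‖ₑ ^ q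
              + ‖G (x + c • ξ) - H x‖ₑ ^ q) ∂(uni N 1) := by
            refine lintegral_mono fun ξ => ?_
            refine le_trans (ENNReal.rpow_le_rpow ?_ hq0) (add_rpow_le' _ _ hq0)
            have e1 : (x + u) + c • (ξ - u') = x + c • ξ := by
              rw [hu', smul_sub, smul_inv_smul₀ ha.ne']; abel
            rw [e1]
            have e : H (x + u) - H x = (G (x + c • ξ) - H x) - (G (x + c • ξ) - H (x + u)) := by
              abel
            calc ‖H (x + u) - H x‖ₑ
                = ‖(G (x + c • ξ) - H x) - (G (x + c • ξ) - H (x + u))‖ₑ := by rw [← e]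
              _ ≤ ‖G (x + c • ξ) - H x‖ₑ + ‖G (x + c • ξ) - H (x + u)‖ₑ := enorm_sub_le
              _ = _ := add_comm _ _
        _ = 2 ^ q * ((∫⁻ ξ in S, ‖G ((x + u) + c • (ξ - u')) - H (x + u)‖ₑ ^ q ∂(uni N 1))
              + ∫⁻ ξ in S, ‖G (x + c • ξ) - H x‖ₑ ^ q ∂(uni N 1)) := by
            have m4 : Measurable (fun ξ => ‖G ((x + u) + c • (ξ - u')) - H (x + u)‖ₑ ^ q) :=
              (m1 (x + u)).comp (measurable_sub_const u')
            rw [lintegral_const_mul, lintegral_add_right _ (m1 x)]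
            exact m4.add (m1 x)
        _ ≤ _ := by
            refine mul_le_mul_right (add_le_add (uni_shift hN
              (g := fun ξ => ‖G ((x + u) + c • ξ) - H (x + u)‖ₑ ^ q) u') ?_) _
            exact lintegral_mono' Measure.restrict_le_self le_rfl
    calc ‖H (x + u) - H x‖ₑ ^ q = 2 * ((1 / 2 : ℝ≥0∞) * ‖H (x + u) - H x‖ₑ ^ q) := by
          rw [← mul_assoc, one_div, ENNReal.mul_inv_cancel (by norm_num) (by norm_num), one_mul]
      _ ≤ _ := by rw [mul_assoc]; gcongr
  calc _ ≤ ∫⁻ x, 2 * 2 ^ q *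
      ((∫⁻ ξ, ‖G ((x + u) + c • ξ) - H (x + u)‖ₑ ^ q ∂(uni N 1))
        + ∫⁻ ξ, ‖G (x + c • ξ) - H x‖ₑ ^ q ∂(uni N 1)) := lintegral_mono hpt
    _ = 2 * 2 ^ q * ((∫⁻ x, ∫⁻ ξ, ‖G ((x + u) + c • ξ) - H (x + u)‖ₑ ^ q ∂(uni N 1))
        + ∫⁻ x, ∫⁻ ξ, ‖G (x + c • ξ) - H x‖ₑ ^ q ∂(uni N 1)) := by
        rw [lintegral_const_mul, lintegral_add_right _ hd1]
        exact (hd1.comp (measurable_add_const u)).add hd1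
    _ = _ := by
        rw [lintegral_add_right_eq_self
          (fun x => ∫⁻ ξ, ‖G (x + c • ξ) - H x‖ₑ ^ q ∂(uni N 1)) u]
        ring

lemma sh_small (hN : IsNorm N) (hn : 0 < n) {F : EuclideanSpace ℝ (Fin n) → Z} {C : ℝ}
    (hF : BC F C) (a : ℕ → ℝ)
    {q : ℝ} (hq : 2 ≤ q) (j : ℕ) (ha : 0 < a j) (u : EuclideanSpace ℝ (Fin n))
    (hu : N u ≤ a j / n) :
    sh q (PP N a (j + 1) F) u ≤ 4 * 2 ^ q * dd N a q F j :=
  sh_small_gen hN hn (hF.PP hN a j).cont (hF.PP hN a (j + 1)).cont ha hq u hu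

lemma sh_main (hN : IsNorm N) (hn : 0 < n) {F : EuclideanSpace ℝ (Fin n) → Z} {C : ℝ}
    (hF : BC F C) (a : ℕ → ℝ) {q : ℝ} (hq : 2 ≤ q) (ha : ∀ j, 0 < a j)
    (han : ∀ j, a (j + 1) = n * a j) (j : ℕ) (u : EuclideanSpace ℝ (Fin n)) (hu : N u ≤ a j) :
    sh q (PP N a j F) u ≤ (2 ^ q) ^ 7 * (dd N a q F j + dd N a q F (j + 1)) := by
  have h1 := sh_step hN hF a hq j u
  have h2 := sh_step hN hF a hq (j + 1) u
  have h3 := sh_small hN hn hF a hq (j + 1) (ha _) u (by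
    rw [han]
    have : (0 : ℝ) < n := by exact_mod_cast hn
    rw [mul_div_cancel_left₀ _ this.ne']; exact hu)
  have hA := four_le_A hq
  rw [four_rpow (by linarith)] at h1 h2
  set A : ℝ≥0∞ := 2 ^ q
  set x := dd N a q F j
  set y := dd N a q F (j + 1)
  have hA2 : (2 : ℝ≥0∞) ≤ A := le_trans (by norm_num) hA
  have hA1 : (1 : ℝ≥0∞) ≤ A := le_trans (by norm_num) hA
  calc sh q (PP N a j F) u ≤ A * A * (2 * x + A * A * (2 * y + 4 * A * y)) := by
        refine h1.trans ?_
        gcongr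
        refine h2.trans ?_
        gcongr
    _ = A ^ 2 * 2 * x + A ^ 4 * (2 + 4 * A) * y := by ring
    _ ≤ A ^ 2 * A ^ 5 * x + A ^ 4 * A ^ 3 * y := by
        gcongr
        · exact hA2.trans (le_self_pow₀ hA1 (by norm_num))
        · calc 2 + 4 * A ≤ A * 1 + A * A := by
                gcongr; rw [mul_one]; exact hA2
            _ ≤ A * A + A * A := by gcongr
            _ = 2 * (A * A) := by ring
            _ ≤ A * (A * A) := by gcongr
            _ = A ^ 3 := by ring
    _ = _ := by ring

lemma sh_sum (hN : IsNorm N) {Y : Type u} [NormedAddCommGroup Y] [NormedSpace ℝ Y]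
    [CompleteSpace Y] {m : ℝ} {F : EuclideanSpace ℝ (Fin n) → Y} {C : ℝ}
    (hF : BC F C) (a : ℕ → ℝ) {q : ℝ} (hq : 2 ≤ q) (hm : MartCotypeBound q Y m) (ha : ∀ j, 0 < a j)
    (J : ℕ) :
    ∑ j ∈ Finset.range J, (2 ^ q) ^ 7 * (dd N a q F j + dd N a q F (j + 1))
      ≤ (2 ^ q) ^ 8 * (ENNReal.ofReal m ^ q * ∫⁻ x, ‖F x‖ₑ ^ q) := by
  have h1 := mart_PP hN (by linarith) hm a (fun j => (ha j).le) hF (J + 1)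
  change ∑ j ∈ Finset.range (J + 1), dd N a q F j ≤ _ at h1
  have h2 : ∑ j ∈ Finset.range J, dd N a q F j ≤ ∑ j ∈ Finset.range (J + 1), dd N a q F j := by
    rw [Finset.sum_range_succ]; exact le_self_add
  have h3 : ∑ j ∈ Finset.range J, dd N a q F (j + 1) ≤ ∑ j ∈ Finset.range (J + 1), dd N a q F j := by
    rw [Finset.sum_range_succ']; exact le_self_add
  rw [← Finset.mul_sum, Finset.sum_add_distrib]
  calc _ ≤ (2 ^ q) ^ 7 * ((ENNReal.ofReal m ^ q * ∫⁻ x, ‖F x‖ₑ ^ q)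
        + (ENNReal.ofReal m ^ q * ∫⁻ x, ‖F x‖ₑ ^ q)) := by
        gcongr
        · exact h2.trans h1
        · exact h3.trans h1
    _ = (2 ^ q) ^ 7 * 2 * (ENNReal.ofReal m ^ q * ∫⁻ x, ‖F x‖ₑ ^ q) := by ring
    _ ≤ (2 ^ q) ^ 7 * 2 ^ q * (ENNReal.ofReal m ^ q * ∫⁻ x, ‖F x‖ₑ ^ q) := by
        gcongr
        exact le_trans (by norm_num) (four_le_A hq)
    _ = _ := by ring

end Shift

section Smooth

variable {n : ℕ} {N : EuclideanSpace ℝ (Fin n) → ℝ}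
variable {Y : Type u} [NormedAddCommGroup Y] [NormedSpace ℝ Y]

lemma fd_bound (hN : IsNorm N) {g : EuclideanSpace ℝ (Fin n) → Y}
    (hg : ContDiff ℝ 1 g) (hL : ∀ x y, ‖g x - g y‖ ≤ N (x - y)) (x v) :
    ‖fderiv ℝ g x v‖ ≤ N v := by
  have h1 : HasFDerivAt g (fderiv ℝ g x) x := (hg.differentiable one_ne_zero x).hasFDerivAt
  have h2 := (h1.hasLineDerivAt v).tendsto_slope_zero
  refine le_of_tendsto h2.norm ?_
  filter_upwards [self_mem_nhdsWithin] with t ht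
  have ht' : t ≠ 0 := ht
  rw [norm_smul, norm_inv, Real.norm_eq_abs, inv_mul_le_iff₀ (abs_pos.2 ht'), ← hN.2.1]
  simpa using hL (x + t • v) x

lemma fd_BC (hN : IsNorm N) {g : EuclideanSpace ℝ (Fin n) → Y}
    (hg : ContDiff ℝ 1 g) (hL : ∀ x y, ‖g x - g y‖ ≤ N (x - y)) (v) :
    BC (fun y => fderiv ℝ g y v) (N v) :=
  ⟨(hg.continuous_fderiv one_ne_zero).clm_apply continuous_const, fun x => fd_bound hN hg hL x v⟩

lemma fd_BC' (hN : IsNorm N) {g : EuclideanSpace ℝ (Fin n) → Y}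
    (hg : ContDiff ℝ 1 g) (hL : ∀ x y, ‖g x - g y‖ ≤ N (x - y)) :
    ∃ C, BC (fun y => fderiv ℝ g y) C := by
  obtain ⟨C, hC, h⟩ := N_bound hN
  refine ⟨C, hg.continuous_fderiv one_ne_zero, fun x => ?_⟩
  exact ContinuousLinearMap.opNorm_le_bound _ hC.le fun v => (fd_bound hN hg hL x v).trans (h v)

lemma PP_clm [CompleteSpace Y] (hN : IsNorm N)
    {D : EuclideanSpace ℝ (Fin n) → EuclideanSpace ℝ (Fin n) →L[ℝ] Y} {C : ℝ}
    (hD : BC D C) (a : ℕ → ℝ) (v) (i : ℕ) :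
    ∀ x, (PP N a i D x) v = PP N a i (fun y => D y v) x := by
  have := uni_prob hN one_pos
  induction i with
  | zero => intro x; rfl
  | succ i ih =>
    intro x
    rw [PP_succ, PP_succ, ContinuousLinearMap.integral_apply
      ((hD.PP hN a i).integrable (by fun_prop) _)]
    simp_rw [ih]

lemma PP_ftc [CompleteSpace Y] (hN : IsNorm N) {g : EuclideanSpace ℝ (Fin n) → Y} {C : ℝ}
    (hg : ContDiff ℝ 1 g) (hgB : BC g C) (hL : ∀ x y, ‖g x - g y‖ ≤ N (x - y)) (a : ℕ → ℝ)
    (v) (i : ℕ) :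
    ∀ x, PP N a i g (x + v) - PP N a i g x
      = ∫ θ in Ioc (0 : ℝ) 1, PP N a i (fun y => fderiv ℝ g y v) (x + θ • v) := by
  have := uni_prob hN one_pos
  induction i with
  | zero =>
    intro x
    rw [PP_zero, PP_zero, ← intervalIntegral.integral_of_le zero_le_one,
      intervalIntegral.integral_eq_sub_of_hasDerivAt (f := fun θ : ℝ => g (x + θ • v))]
    · simp
    · intro θ _
      have h1 : HasFDerivAt g (fderiv ℝ g (x + θ • v)) (x + θ • v) :=
        (hg.differentiable one_ne_zero _).hasFDerivAt
      have h2 : HasDerivAt (fun θ : ℝ => x + θ • v) v θ := by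
        simpa using ((hasDerivAt_id θ).smul_const v).const_add x
      exact h1.comp_hasDerivAt θ h2
    · refine Continuous.intervalIntegrable ?_ _ _
      exact (fd_BC hN hg hL v).cont.comp (by fun_prop)
  | succ i ih =>
    intro x
    have hB := (fd_BC hN hg hL v).PP hN a i
    have hgi := hgB.PP hN a i
    rw [PP_succ, PP_succ, ← integral_sub (hgi.integrable (by fun_prop) _)
      (hgi.integrable (by fun_prop) _)]
    have e1 : ∀ ξ, PP N a i g (x + v + a i • ξ) - PP N a i g (x + a i • ξ)
        = ∫ θ in Ioc (0 : ℝ) 1, PP N a i (fun y => fderiv ℝ g y v) (x + θ • v + a i • ξ) := by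
      intro ξ
      rw [show x + v + a i • ξ = (x + a i • ξ) + v by abel, ih]
      refine integral_congr_ae (ae_of_all _ fun θ => ?_)
      simp only
      congr 1; abel
    simp_rw [e1, PP_succ]
    rw [integral_integral_swap]
    exact hB.integrable (g := fun p : EuclideanSpace ℝ (Fin n) × ℝ => x + p.2 • v + a i • p.1)
      (by fun_prop) _

/-- Taylor remainder. -/
def RR (N : EuclideanSpace ℝ (Fin n) → ℝ) (a : ℕ → ℝ) (g : EuclideanSpace ℝ (Fin n) → Y) (i : ℕ)
    (x v : EuclideanSpace ℝ (Fin n)) : Y :=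
  PP N a i g (x + v) - PP N a i g x - (PP N a i (fun y => fderiv ℝ g y) x) v

lemma RR_cont (hN : IsNorm N) {g : EuclideanSpace ℝ (Fin n) → Y} {C : ℝ}
    (hg : ContDiff ℝ 1 g) (hgB : BC g C) (hL : ∀ x y, ‖g x - g y‖ ≤ N (x - y)) (a : ℕ → ℝ)
    (i : ℕ) : Continuous (fun p : EuclideanSpace ℝ (Fin n) × EuclideanSpace ℝ (Fin n) =>
      RR N a g i p.1 (a i • p.2)) := by
  obtain ⟨C', hD⟩ := fd_BC' hN hg hL
  have h1 := (hgB.PP hN a i).cont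
  have h2 := (hD.PP hN a i).cont
  unfold RR
  exact ((h1.comp (by fun_prop)).sub (h1.comp (by fun_prop))).sub
    ((h2.comp continuous_fst).clm_apply (by fun_prop))

lemma RR_eq [CompleteSpace Y] (hN : IsNorm N) {g : EuclideanSpace ℝ (Fin n) → Y} {C : ℝ}
    (hg : ContDiff ℝ 1 g) (hgB : BC g C) (hL : ∀ x y, ‖g x - g y‖ ≤ N (x - y)) (a : ℕ → ℝ)
    (i : ℕ) (x w) (b : ℝ) :
    RR N a g i x (b • w) = b • ∫ θ in Ioc (0 : ℝ) 1,
      (PP N a i (fun y => fderiv ℝ g y w) (x + θ • b • w)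
        - PP N a i (fun y => fderiv ℝ g y w) x) := by
  obtain ⟨C', hD⟩ := fd_BC' hN hg hL
  have hB := (fd_BC hN hg hL w).PP hN a i
  have e : ∀ y, PP N a i (fun y => fderiv ℝ g y (b • w)) y
      = b • PP N a i (fun y => fderiv ℝ g y w) y := by
    intro y
    rw [← PP_clm hN hD a (b • w) i y, ← PP_clm hN hD a w i y, map_smul]
  rw [RR, PP_ftc hN hg hgB hL, PP_clm hN hD a]
  simp_rw [e]
  rw [integral_smul, ← smul_sub, integral_sub (hB.integrable (by fun_prop) _) (integrable_const _)]
  simp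

lemma RR_bound [CompleteSpace Y] (hN : IsNorm N) (hn : 0 < n)
    {g : EuclideanSpace ℝ (Fin n) → Y} {C : ℝ}
    (hg : ContDiff ℝ 1 g) (hgB : BC g C) (hL : ∀ x y, ‖g x - g y‖ ≤ N (x - y)) (a : ℕ → ℝ)
    {q : ℝ} (hq : 2 ≤ q) (ha : ∀ j, 0 < a j) (han : ∀ j, a (j + 1) = n * a j)
    (i : ℕ) (w) (hw : N w ≤ 1) :
    ((ENNReal.ofReal (a i))⁻¹) ^ q * ∫⁻ x, ‖RR N a g i x (a i • w)‖ₑ ^ q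
      ≤ (2 ^ q) ^ 7 * (dd N a q (fun y => fderiv ℝ g y w) i
        + dd N a q (fun y => fderiv ℝ g y w) (i + 1)) := by
  have hq0 : 0 ≤ q := by linarith
  have hB := fd_BC hN hg hL w
  have hP := hB.PP hN a i
  have hai := ha i
  set F : EuclideanSpace ℝ (Fin n) → Y := fun y => fderiv ℝ g y w with hF
  set P := PP N a i F with hPdef
  have hprob : IsProbabilityMeasure (volume.restrict (Ioc (0 : ℝ) 1)) := ⟨by simp⟩
  have hPc := hP.cont
  have hcont : Continuous (fun p : EuclideanSpace ℝ (Fin n) × ℝ =>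
      P (p.1 + p.2 • a i • w) - P p.1) := by fun_prop
  have h1 : ∀ x, ‖RR N a g i x (a i • w)‖ₑ ^ q ≤ ENNReal.ofReal (a i) ^ q *
      ∫⁻ θ in Ioc (0 : ℝ) 1, ‖P (x + θ • a i • w) - P x‖ₑ ^ q := by
    intro x
    rw [RR_eq hN hg hgB hL, enorm_smul, ENNReal.mul_rpow_of_nonneg _ _ hq0, Real.enorm_eq_ofReal
      hai.le]
    refine mul_le_mul_right (enorm_integral_rpow_le _ ?_ (by linarith)) _
    exact (hcont.comp (by fun_prop : Continuous fun θ : ℝ => (x, θ))).aestronglyMeasurable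
  have hc0 : ENNReal.ofReal (a i) ≠ 0 := by simpa using hai
  have hcc : ((ENNReal.ofReal (a i))⁻¹) ^ q * ENNReal.ofReal (a i) ^ q = 1 := by
    rw [← ENNReal.mul_rpow_of_nonneg _ _ hq0, ENNReal.inv_mul_cancel hc0 ENNReal.ofReal_ne_top,
      ENNReal.one_rpow]
  calc _ ≤ ((ENNReal.ofReal (a i))⁻¹) ^ q * ∫⁻ x, ENNReal.ofReal (a i) ^ q *
        ∫⁻ θ in Ioc (0 : ℝ) 1, ‖P (x + θ • a i • w) - P x‖ₑ ^ q :=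
        mul_le_mul_right (lintegral_mono h1) _
    _ = ∫⁻ x, ∫⁻ θ in Ioc (0 : ℝ) 1, ‖P (x + θ • a i • w) - P x‖ₑ ^ q := by
        rw [lintegral_const_mul' _ _ (ENNReal.rpow_ne_top_of_nonneg hq0 ENNReal.ofReal_ne_top),
          ← mul_assoc, hcc, one_mul]
    _ = ∫⁻ θ in Ioc (0 : ℝ) 1, sh q P (θ • a i • w) := by
        rw [lintegral_lintegral_swap]
        · rfl
        · exact (hcont.enorm.measurable.pow_const q).aemeasurable
    _ ≤ ∫⁻ θ in Ioc (0 : ℝ) 1, (2 ^ q) ^ 7 * (dd N a q F i + dd N a q F (i + 1)) := by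
        refine setLIntegral_mono measurable_const fun θ hθ => ?_
        refine sh_main hN hn hB a hq ha han i _ ?_
        rw [N_smul hN hθ.1.le, N_smul hN hai.le]
        have h0 := N_nonneg hN w
        calc θ * (a i * N w) ≤ 1 * (a i * 1) := by
              gcongr
              exact hθ.2
          _ = a i := by ring
    _ = _ := by simp

lemma fd_lq (hN : IsNorm N) {g : EuclideanSpace ℝ (Fin n) → Y}
    (hg : ContDiff ℝ 1 g) (hL : ∀ x y, ‖g x - g y‖ ≤ N (x - y)) {q : ℝ} (hq : 2 ≤ q) (w)
    (hw : N w ≤ 1) : ∫⁻ x, ‖fderiv ℝ g x w‖ₑ ^ q ≤ volume (tsupport g) := by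
  have hm : MeasurableSet (tsupport g) := (isClosed_tsupport g).measurableSet
  calc ∫⁻ x, ‖fderiv ℝ g x w‖ₑ ^ q ≤ ∫⁻ x, (tsupport g).indicator 1 x := by
        refine lintegral_mono fun x => ?_
        by_cases hx : x ∈ tsupport g
        · simp only [hx, indicator_of_mem, Pi.one_apply]
          refine ENNReal.rpow_le_one ?_ (by linarith)
          rw [← ofReal_norm]
          exact ENNReal.ofReal_le_one.2 ((fd_bound hN hg hL x w).trans hw)
        · have : fderiv ℝ g x = 0 := by
            by_contra h
            exact hx (support_fderiv_subset ℝ h)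
          have hq' : 0 < q := by linarith
          simp [this, hq']
    _ = _ := lintegral_indicator_one hm

lemma RR_sum [CompleteSpace Y] (hN : IsNorm N) (hn : 0 < n)
    {g : EuclideanSpace ℝ (Fin n) → Y} {C : ℝ} {m : ℝ}
    (hg : ContDiff ℝ 1 g) (hgB : BC g C) (hL : ∀ x y, ‖g x - g y‖ ≤ N (x - y)) (a : ℕ → ℝ)
    {q : ℝ} (hq : 2 ≤ q) (hm : MartCotypeBound q Y m)
    (ha : ∀ j, 0 < a j) (han : ∀ j, a (j + 1) = n * a j)
    (J : ℕ) (w) (hw : N w ≤ 1) :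
    ∑ i ∈ Finset.range J, ((ENNReal.ofReal (a i))⁻¹) ^ q * ∫⁻ x, ‖RR N a g i x (a i • w)‖ₑ ^ q
      ≤ (2 ^ q) ^ 8 * (ENNReal.ofReal m ^ q * volume (tsupport g)) := by
  refine (Finset.sum_le_sum fun i _ => RR_bound hN hn hg hgB hL a hq ha han i w hw).trans ?_
  refine (sh_sum hN (fd_BC hN hg hL w) a hq hm ha J).trans ?_
  gcongr
  exact fd_lq hN hg hL hq w hw

/-- averaged remainder -/
def WW (N : EuclideanSpace ℝ (Fin n) → ℝ) (a : ℕ → ℝ) (q : ℝ) (g : EuclideanSpace ℝ (Fin n) → Y)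
    (i : ℕ) : ℝ≥0∞ :=
  ((ENNReal.ofReal (a i))⁻¹) ^ q *
    ∫⁻ x, ∫⁻ ξ, ‖RR N a g i x (a i • ξ)‖ₑ ^ q ∂(uni N 1)

lemma WW_sum [CompleteSpace Y] (hN : IsNorm N) (hn : 0 < n)
    {g : EuclideanSpace ℝ (Fin n) → Y} {C : ℝ} {m : ℝ}
    (hg : ContDiff ℝ 1 g) (hgB : BC g C) (hL : ∀ x y, ‖g x - g y‖ ≤ N (x - y)) (a : ℕ → ℝ)
    {q : ℝ} (hq : 2 ≤ q) (hm : MartCotypeBound q Y m)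
    (ha : ∀ j, 0 < a j) (han : ∀ j, a (j + 1) = n * a j) (J : ℕ) :
    ∑ i ∈ Finset.range J, WW N a q g i
      ≤ (2 ^ q) ^ 8 * (ENNReal.ofReal m ^ q * volume (tsupport g)) := by
  have := uni_prob hN one_pos
  have hc := RR_cont hN hg hgB hL a
  have hmz : ∀ i, Measurable fun p : EuclideanSpace ℝ (Fin n) × EuclideanSpace ℝ (Fin n) =>
      ‖RR N a g i p.1 (a i • p.2)‖ₑ ^ q := fun i => (hc i).enorm.measurable.pow_const q
  have e : ∀ i, WW N a q g i = ∫⁻ ξ, ((ENNReal.ofReal (a i))⁻¹) ^ q *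
      (∫⁻ x, ‖RR N a g i x (a i • ξ)‖ₑ ^ q) ∂(uni N 1) := by
    intro i
    rw [WW, lintegral_lintegral_swap (hmz i).aemeasurable, lintegral_const_mul]
    exact (hmz i).lintegral_prod_left'
  simp_rw [e]
  rw [← lintegral_finsetSum']
  · calc _ ≤ ∫⁻ ξ, (2 ^ q) ^ 8 * (ENNReal.ofReal m ^ q * volume (tsupport g)) ∂(uni N 1) := by
          refine lintegral_mono_ae ?_
          filter_upwards [uni_ae hN 1] with ξ hξ
          exact RR_sum hN hn hg hgB hL a hq hm ha han J ξ hξ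
      _ = _ := by simp
  · intro i _
    exact ((hmz i).lintegral_prod_left'.const_mul _).aemeasurable

lemma uni_lin (hN : IsNorm N) (L : EuclideanSpace ℝ (Fin n) →L[ℝ] Y) :
    ∫ ξ, L ξ ∂(uni N 1) = 0 := by
  have h : ∫ ξ, L ξ ∂(uni N 1) = ∫ ξ, L (-ξ) ∂(uni N 1) := by
    conv_lhs => rw [← uni_neg hN 1]
    rw [integral_map measurable_neg.aemeasurable L.continuous.aestronglyMeasurable]
  simp only [map_neg, integral_neg] at h
  have h2 : (2 : ℝ) • ∫ ξ, L ξ ∂(uni N 1) = 0 := by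
    rw [two_smul]
    nth_rewrite 1 [h]
    exact neg_add_cancel _
  exact (smul_eq_zero.1 h2).resolve_left two_ne_zero

lemma PP_diff [CompleteSpace Y] (hN : IsNorm N) {g : EuclideanSpace ℝ (Fin n) → Y} {C : ℝ}
    (hgB : BC g C) (a : ℕ → ℝ) (i : ℕ) (x) :
    PP N a (i + 1) g x - PP N a i g x = ∫ ξ, RR N a g i x (a i • ξ) ∂(uni N 1) := by
  have := uni_prob hN one_pos
  have hgi := hgB.PP hN a i
  set L := PP N a i (fun y => fderiv ℝ g y) x with hLd
  have hi : Integrable (fun ξ => L (a i • ξ)) (uni N 1) := by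
    refine Integrable.of_bound (C := ‖L‖ * (|a i| * (N_lower hN).choose⁻¹)) (by fun_prop) ?_
    obtain ⟨hc, h⟩ := (N_lower hN).choose_spec
    filter_upwards [uni_ae hN 1] with ξ hξ
    refine (L.le_opNorm _).trans ?_
    rw [norm_smul, Real.norm_eq_abs]
    gcongr
    rw [← one_div, le_div_iff₀ hc, mul_comm]
    exact (h ξ).trans hξ
  simp only [RR, ← hLd]
  have hi1 : Integrable (fun ξ => PP N a i g (x + a i • ξ)) (uni N 1) :=
    hgi.integrable (by fun_prop) _
  have hi2 : Integrable (fun ξ => PP N a i g (x + a i • ξ) - PP N a i g x) (uni N 1) :=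
    hi1.sub (integrable_const _)
  rw [integral_sub hi2 hi, integral_sub hi1 (integrable_const _)]
  simp_rw [map_smul]
  rw [integral_smul, uni_lin hN]
  simp [PP_succ]

lemma gg_le [CompleteSpace Y] (hN : IsNorm N) {g : EuclideanSpace ℝ (Fin n) → Y} {C : ℝ}
    (hg : ContDiff ℝ 1 g) (hgB : BC g C) (hL : ∀ x y, ‖g x - g y‖ ≤ N (x - y)) (a : ℕ → ℝ)
    {q : ℝ} (hq : 2 ≤ q) (i : ℕ) :
    ((ENNReal.ofReal (a i))⁻¹) ^ q * ∫⁻ x, ‖PP N a (i + 1) g x - PP N a i g x‖ₑ ^ q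
      ≤ WW N a q g i := by
  have := uni_prob hN one_pos
  refine mul_le_mul_right (lintegral_mono fun x => ?_) _
  rw [PP_diff hN hgB]
  refine enorm_integral_rpow_le _ ?_ (by linarith)
  exact ((RR_cont hN hg hgB hL a i).comp
    (by fun_prop : Continuous fun ξ => (x, ξ))).aestronglyMeasurable

lemma geo_sum (G h : ℕ → ℝ≥0∞) (hG : ∀ i, 2 * G (i + 1) ≤ G i + h i) (J : ℕ) :
    ∑ i ∈ Finset.range J, G i + 2 * G J ≤ 2 * G 0 + ∑ i ∈ Finset.range J, h i := by
  induction J with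
  | zero => simp
  | succ J ih =>
    rw [Finset.sum_range_succ, Finset.sum_range_succ]
    calc _ ≤ ∑ i ∈ Finset.range J, G i + G J + (G J + h J) := by
          gcongr; exact hG J
      _ = (∑ i ∈ Finset.range J, G i + 2 * G J) + h J := by ring
      _ ≤ (2 * G 0 + ∑ i ∈ Finset.range J, h i) + h J := by gcongr
      _ = _ := by ring

lemma coef_step {n : ℕ} (hn : 4 ≤ n) {q : ℝ} (hq : 2 ≤ q) {b b' : ℝ}
    (h : b' = n * b) :
    2 * 2 ^ q * ((ENNReal.ofReal b')⁻¹) ^ q ≤ ((ENNReal.ofReal b)⁻¹) ^ q := by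
  have hq0 : 0 ≤ q := by linarith
  have e : (ENNReal.ofReal b)⁻¹ = n * (ENNReal.ofReal b')⁻¹ := by
    rw [h, ENNReal.ofReal_mul (by positivity), ENNReal.ofReal_natCast, ENNReal.mul_inv
      (Or.inr ENNReal.ofReal_ne_top) (Or.inl (ENNReal.natCast_ne_top n)), ← mul_assoc,
      ENNReal.mul_inv_cancel (by norm_cast; omega) (ENNReal.natCast_ne_top n), one_mul]
  rw [e, ENNReal.mul_rpow_of_nonneg _ _ hq0]
  gcongr
  calc (2 : ℝ≥0∞) * 2 ^ q ≤ 2 ^ q * 2 ^ q := by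
        gcongr
        exact le_trans (by norm_num) (four_le_A hq)
    _ = 4 ^ q := (four_rpow hq0).symm
    _ ≤ n ^ q := by
        gcongr
        exact_mod_cast hn

lemma GG_sum [CompleteSpace Y] (hN : IsNorm N) (hn : 4 ≤ n)
    {g f : EuclideanSpace ℝ (Fin n) → Y} {C : ℝ} {m : ℝ} (hf : Continuous f)
    (hg : ContDiff ℝ 1 g) (hgB : BC g C) (hL : ∀ x y, ‖g x - g y‖ ≤ N (x - y)) (a : ℕ → ℝ)
    {q : ℝ} (hq : 2 ≤ q) (hm : MartCotypeBound q Y m)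
    (ha : ∀ j, 0 < a j) (han : ∀ j, a (j + 1) = n * a j) (J : ℕ) :
    ∑ i ∈ Finset.range J, ((ENNReal.ofReal (a i))⁻¹) ^ q * ∫⁻ x, ‖f x - PP N a i g x‖ₑ ^ q
      ≤ 2 * (((ENNReal.ofReal (a 0))⁻¹) ^ q * ∫⁻ x, ‖f x - g x‖ₑ ^ q)
        + (2 ^ q) ^ 8 * (ENNReal.ofReal m ^ q * volume (tsupport g)) := by
  have hq0 : 0 ≤ q := by linarith
  have key := geo_sum (fun i => ((ENNReal.ofReal (a i))⁻¹) ^ q * ∫⁻ x, ‖f x - PP N a i g x‖ₑ ^ q)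
    (WW N a q g) (by
      intro i
      have hc := (hgB.PP hN a i).cont
      have hc1 := (hgB.PP hN a (i + 1)).cont
      have h1 : ∫⁻ x, ‖f x - PP N a (i + 1) g x‖ₑ ^ q ≤ 2 ^ q *
          ((∫⁻ x, ‖f x - PP N a i g x‖ₑ ^ q)
            + ∫⁻ x, ‖PP N a (i + 1) g x - PP N a i g x‖ₑ ^ q) := by
        have hms : Measurable fun x => ‖f x - PP N a i g x‖ₑ ^ q :=
          (hf.sub hc).enorm.measurable.pow_const q
        rw [← lintegral_add_left hms,
          ← lintegral_const_mul' _ _ (ENNReal.rpow_ne_top_of_nonneg hq0 (by norm_num))]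
        refine lintegral_mono fun x => ?_
        refine le_trans (ENNReal.rpow_le_rpow ?_ hq0) (add_rpow_le' _ _ hq0)
        rw [show f x - PP N a (i + 1) g x = (f x - PP N a i g x)
          - (PP N a (i + 1) g x - PP N a i g x) by abel]
        exact enorm_sub_le
      calc _ ≤ 2 * (((ENNReal.ofReal (a (i + 1)))⁻¹) ^ q * (2 ^ q *
          ((∫⁻ x, ‖f x - PP N a i g x‖ₑ ^ q)
            + ∫⁻ x, ‖PP N a (i + 1) g x - PP N a i g x‖ₑ ^ q))) := by gcongr
        _ = (2 * 2 ^ q * ((ENNReal.ofReal (a (i + 1)))⁻¹) ^ q) *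
          ((∫⁻ x, ‖f x - PP N a i g x‖ₑ ^ q)
            + ∫⁻ x, ‖PP N a (i + 1) g x - PP N a i g x‖ₑ ^ q) := by ring
        _ ≤ ((ENNReal.ofReal (a i))⁻¹) ^ q *
          ((∫⁻ x, ‖f x - PP N a i g x‖ₑ ^ q)
            + ∫⁻ x, ‖PP N a (i + 1) g x - PP N a i g x‖ₑ ^ q) :=
            mul_le_mul_left (coef_step hn hq (han i)) _
        _ ≤ _ := by
            rw [mul_add]
            exact add_le_add le_rfl (gg_le hN hg hgB hL a hq i)) J
  refine (le_self_add.trans key).trans ?_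
  exact add_le_add le_rfl (WW_sum hN (by omega) hg hgB hL a hq hm ha han J)

/-- The best affine approximation quantity. -/
def Phi (N : EuclideanSpace ℝ (Fin n) → ℝ) (q : ℝ) (f : EuclideanSpace ℝ (Fin n) → Y)
    (x : EuclideanSpace ℝ (Fin n)) (t : ℝ) : ℝ≥0∞ :=
  ⨅ Λ ∈ {Λ : EuclideanSpace ℝ (Fin n) →ᵃ[ℝ] Y | ∀ u v, ‖Λ u - Λ v‖ ≤ N (u - v)},
    ∫⁻ ξ, ‖f (x + t • ξ) - Λ (x + t • ξ)‖ₑ ^ q ∂(uni N 1)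

lemma Phi_le [CompleteSpace Y] (hN : IsNorm N) {g f : EuclideanSpace ℝ (Fin n) → Y}
    (hg : ContDiff ℝ 1 g) (hL : ∀ x y, ‖g x - g y‖ ≤ N (x - y)) (a : ℕ → ℝ)
    {q : ℝ} (i : ℕ) (x) :
    Phi N q f x (a i) ≤ ∫⁻ ξ, ‖f (x + a i • ξ) - (PP N a i g x +
      (PP N a i (fun y => fderiv ℝ g y) x) (a i • ξ))‖ₑ ^ q ∂(uni N 1) := by
  obtain ⟨C', hD⟩ := fd_BC' hN hg hL
  set L := PP N a i (fun y => fderiv ℝ g y) x with hLd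
  have hLb : ∀ v, ‖L v‖ ≤ N v := fun v => by
    rw [hLd, PP_clm hN hD]
    exact ((fd_BC hN hg hL v).PP hN a i).bd x
  let Λ : EuclideanSpace ℝ (Fin n) →ᵃ[ℝ] Y :=
    L.toLinearMap.toAffineMap + AffineMap.const ℝ _ (PP N a i g x - L x)
  have hΛ : ∀ y, Λ y = L y + (PP N a i g x - L x) := fun y => rfl
  refine (iInf₂_le Λ ?_).trans (le_of_eq ?_)
  · intro u v
    rw [hΛ, hΛ, add_sub_add_right_eq_sub, ← map_sub]
    exact hLb _
  · refine lintegral_congr fun ξ => ?_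
    rw [hΛ]
    have e : PP N a i g x + L (a i • ξ) = L (x + a i • ξ) + (PP N a i g x - L x) := by
      rw [map_add]; abel
    rw [e]

lemma Phi_sum_smooth [CompleteSpace Y] (hN : IsNorm N) (hn : 4 ≤ n)
    {g f : EuclideanSpace ℝ (Fin n) → Y} {C : ℝ} {m : ℝ} (hf : Continuous f)
    (hg : ContDiff ℝ 1 g) (hgB : BC g C) (hL : ∀ x y, ‖g x - g y‖ ≤ N (x - y)) (a : ℕ → ℝ)
    {q : ℝ} (hq : 2 ≤ q) (hm : MartCotypeBound q Y m)
    (ha : ∀ j, 0 < a j) (han : ∀ j, a (j + 1) = n * a j) (J : ℕ) :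
    ∑ i ∈ Finset.range J, ((ENNReal.ofReal (a i))⁻¹) ^ q * ∫⁻ x, Phi N q f x (a i)
      ≤ 2 ^ q * (2 * (((ENNReal.ofReal (a 0))⁻¹) ^ q * ∫⁻ x, ‖f x - g x‖ₑ ^ q)
        + 2 * ((2 ^ q) ^ 8 * (ENNReal.ofReal m ^ q * volume (tsupport g)))) := by
  have hq0 : 0 ≤ q := by linarith
  have := uni_prob hN one_pos
  have h1 : ∀ i, ((ENNReal.ofReal (a i))⁻¹) ^ q * ∫⁻ x, Phi N q f x (a i) ≤ 2 ^ q *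
      (((ENNReal.ofReal (a i))⁻¹) ^ q * (∫⁻ x, ‖f x - PP N a i g x‖ₑ ^ q) + WW N a q g i) := by
    intro i
    have hc := (hgB.PP hN a i).cont
    have hm1 : Measurable fun x => ‖f x - PP N a i g x‖ₑ ^ q :=
      (hf.sub hc).enorm.measurable.pow_const q
    have hm2 : Measurable fun p : EuclideanSpace ℝ (Fin n) × EuclideanSpace ℝ (Fin n) =>
      ‖RR N a g i p.1 (a i • p.2)‖ₑ ^ q :=
      (RR_cont hN hg hgB hL a i).enorm.measurable.pow_const q
    have hm3 : Measurable fun p : EuclideanSpace ℝ (Fin n) × EuclideanSpace ℝ (Fin n) =>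
      ‖f (p.1 + a i • p.2) - PP N a i g (p.1 + a i • p.2)‖ₑ ^ q := hm1.comp (by fun_prop)
    calc _ ≤ ((ENNReal.ofReal (a i))⁻¹) ^ q * ∫⁻ x, ∫⁻ ξ, 2 ^ q *
          (‖f (x + a i • ξ) - PP N a i g (x + a i • ξ)‖ₑ ^ q + ‖RR N a g i x (a i • ξ)‖ₑ ^ q)
            ∂(uni N 1) := by
          refine mul_le_mul_right (lintegral_mono fun x => (Phi_le hN hg hL a i x).trans
            (lintegral_mono fun ξ => ?_)) _
          refine le_trans (ENNReal.rpow_le_rpow ?_ hq0) (add_rpow_le' _ _ hq0)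
          refine le_trans (le_of_eq ?_) (enorm_add_le _ _)
          rw [RR]
          congr 1
          abel
      _ = ((ENNReal.ofReal (a i))⁻¹) ^ q * (2 ^ q * ((∫⁻ x, ∫⁻ ξ,
          ‖f (x + a i • ξ) - PP N a i g (x + a i • ξ)‖ₑ ^ q ∂(uni N 1)) +
            ∫⁻ x, ∫⁻ ξ, ‖RR N a g i x (a i • ξ)‖ₑ ^ q ∂(uni N 1))) := by
          have hA : (2 : ℝ≥0∞) ^ q ≠ ⊤ := ENNReal.rpow_ne_top_of_nonneg hq0 (by norm_num)
          simp_rw [lintegral_const_mul' _ _ hA]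
          rw [← lintegral_add_left hm3.lintegral_prod_right']
          congr 3 with x
          exact lintegral_add_left (hm3.comp measurable_prodMk_left) _
      _ = _ := by
          rw [lintegral_avg hN hm1 (a i), WW]
          ring
  refine (Finset.sum_le_sum fun i _ => h1 i).trans ?_
  rw [← Finset.mul_sum, Finset.sum_add_distrib]
  refine mul_le_mul_right ?_ _
  refine (add_le_add (GG_sum hN hn hf hg hgB hL a hq hm ha han J)
    (WW_sum hN (by omega) hg hgB hL a hq hm ha han J)).trans (le_of_eq ?_)
  ring

end Smooth

section Moll

variable {n : ℕ} {N : EuclideanSpace ℝ (Fin n) → ℝ}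
variable {Y : Type u} [NormedAddCommGroup Y] [NormedSpace ℝ Y]

lemma lip_cont (hN : IsNorm N) {f : EuclideanSpace ℝ (Fin n) → Y}
    (hL : ∀ x y, ‖f x - f y‖ ≤ N (x - y)) : Continuous f := by
  obtain ⟨C, hC, h⟩ := N_bound hN
  have : LipschitzWith ⟨C, hC.le⟩ f := by
    refine LipschitzWith.of_dist_le_mul fun x y => ?_
    rw [dist_eq_norm, dist_eq_norm]
    exact (hL x y).trans (h _)
  exact this.continuous

lemma moll [CompleteSpace Y] (hN : IsNorm N) {f : EuclideanSpace ℝ (Fin n) → Y}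
    (hf : HasCompactSupport f) (hL : ∀ x y, ‖f x - f y‖ ≤ N (x - y)) {C : ℝ}
    (hC : ∀ x, N x ≤ C * ‖x‖) (hC0 : 0 < C) {δ : ℝ} (hδ : 0 < δ) :
    ∃ g : EuclideanSpace ℝ (Fin n) → Y, ContDiff ℝ 1 g ∧ (∃ C', BC g C') ∧
      (∀ x y, ‖g x - g y‖ ≤ N (x - y)) ∧ tsupport g ⊆ cthickening δ (tsupport f) ∧
      ∀ x, ‖f x - g x‖ ≤ C * δ := by
  have hfc := lip_cont hN hL
  let φ : ContDiffBump (0 : EuclideanSpace ℝ (Fin n)) := ⟨δ / 2, δ, by positivity, by linarith⟩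
  have hφc : HasCompactSupport (φ.normed volume) := φ.hasCompactSupport_normed
  have hφs : ContDiff ℝ 1 (φ.normed volume) := φ.contDiff_normed (n := 1)
  let g := MeasureTheory.convolution (φ.normed volume) f (ContinuousLinearMap.lsmul ℝ ℝ) volume
  have hgs : ContDiff ℝ 1 g := hφc.contDiff_convolution_left (n := 1) _ hφs
    hfc.locallyIntegrable
  have hgc : HasCompactSupport g := hφc.convolution _ hf
  have hinteg : ∀ x, Integrable (fun t => φ.normed volume t • f (x - t)) := by
    intro x
    refine Continuous.integrable_of_hasCompactSupport ?_ ?_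
    · exact hφs.continuous.smul (hfc.comp (by fun_prop))
    · exact hφc.smul_right
  have hg : ∀ x, g x = ∫ t, φ.normed volume t • f (x - t) := fun x => rfl
  refine ⟨g, hgs, ?_, ?_, ?_, ?_⟩
  · obtain ⟨C', hC'⟩ := hgs.continuous.bounded_above_of_compact_support hgc
    exact ⟨C', hgs.continuous, hC'⟩
  · intro x y
    rw [hg, hg, ← integral_sub (hinteg x) (hinteg y)]
    calc _ ≤ ∫ t, φ.normed volume t * N (x - y) := by
          refine norm_integral_le_of_norm_le ?_ (ae_of_all _ fun t => ?_)
          · exact (hφs.continuous.integrable_of_hasCompactSupport hφc).mul_const _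
          · rw [← smul_sub, norm_smul, Real.norm_of_nonneg (φ.nonneg_normed t)]
            refine mul_le_mul_of_nonneg_left ?_ (φ.nonneg_normed t)
            simpa using hL (x - t) (y - t)
      _ = N (x - y) := by rw [integral_mul_const, φ.integral_normed, one_mul]
  · refine closure_minimal ?_ isClosed_cthickening
    refine (support_convolution_subset _).trans ?_
    rintro y ⟨u, hu, v, hv, rfl⟩
    rw [φ.support_normed_eq] at hu
    refine mem_cthickening_of_dist_le _ v δ _ (subset_tsupport f hv) ?_
    have : ‖u‖ < δ := by simpa using hu
    simpa [dist_eq_norm] using this.le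
  · intro x
    rw [norm_sub_rev, ← dist_eq_norm]
    refine ContDiffBump.dist_normed_convolution_le hfc.aestronglyMeasurable fun y hy => ?_
    rw [dist_eq_norm]
    refine (hL y x).trans ((hC _).trans ?_)
    have : ‖y - x‖ < δ := by simpa [dist_eq_norm] using hy
    gcongr

lemma Phi_sum [CompleteSpace Y] (hN : IsNorm N) (hn : 4 ≤ n)
    {f : EuclideanSpace ℝ (Fin n) → Y} {m : ℝ}
    (hf : HasCompactSupport f) (hL : ∀ x y, ‖f x - f y‖ ≤ N (x - y)) (a : ℕ → ℝ)
    {q : ℝ} (hq : 2 ≤ q) (hm : MartCotypeBound q Y m)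
    (ha : ∀ j, 0 < a j) (han : ∀ j, a (j + 1) = n * a j) (J : ℕ) :
    ∑ i ∈ Finset.range J, ((ENNReal.ofReal (a i))⁻¹) ^ q * ∫⁻ x, Phi N q f x (a i)
      ≤ (2 ^ q) ^ 10 * (ENNReal.ofReal m ^ q * volume (tsupport f)) := by
  have hq0 : 0 ≤ q := by linarith
  have hq1 : 0 < q := by linarith
  have hfc := lip_cont hN hL
  obtain ⟨C, hC0, hC⟩ := N_bound hN
  set c := ((ENNReal.ofReal (a 0))⁻¹) ^ q with hc
  have hct : c ≠ ⊤ := by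
    refine ENNReal.rpow_ne_top_of_nonneg hq0 (ENNReal.inv_ne_top.2 ?_)
    simpa using ha 0
  set V1 := volume (cthickening 1 (tsupport f)) with hV1
  have hV1t : V1 ≠ ⊤ := (IsCompact.cthickening hf.isCompact).measure_lt_top.ne
  have hA : (2 : ℝ≥0∞) ^ q ≠ ⊤ := ENNReal.rpow_ne_top_of_nonneg hq0 (by norm_num)
  have hmt : ENNReal.ofReal m ^ q ≠ ⊤ := ENNReal.rpow_ne_top_of_nonneg hq0 ENNReal.ofReal_ne_top
  have key : ∀ δ : ℝ, 0 < δ → δ ≤ 1 →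
      ∑ i ∈ Finset.range J, ((ENNReal.ofReal (a i))⁻¹) ^ q * ∫⁻ x, Phi N q f x (a i)
      ≤ 2 ^ q * (2 * (c * (V1 * ENNReal.ofReal (C * δ) ^ q))
        + 2 * ((2 ^ q) ^ 8 * (ENNReal.ofReal m ^ q * volume (cthickening δ (tsupport f))))) := by
    intro δ hδ hδ1
    obtain ⟨g, hg, ⟨C', hgB⟩, hgL, hgs, hfg⟩ := moll hN hf hL hC hC0 hδ
    refine (Phi_sum_smooth hN hn hfc hg hgB hgL a hq hm ha han J).trans ?_
    have h1 : ∫⁻ x, ‖f x - g x‖ₑ ^ q ≤ V1 * ENNReal.ofReal (C * δ) ^ q := by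
      calc ∫⁻ x, ‖f x - g x‖ₑ ^ q ≤ ∫⁻ x, (cthickening 1 (tsupport f)).indicator
            (fun _ => ENNReal.ofReal (C * δ) ^ q) x := by
            refine lintegral_mono fun x => ?_
            by_cases hx : x ∈ cthickening 1 (tsupport f)
            · simp only [hx, indicator_of_mem]
              refine ENNReal.rpow_le_rpow ?_ hq0
              rw [← ofReal_norm]
              exact ENNReal.ofReal_le_ofReal (hfg x)
            · have e1 : f x = 0 := by
                by_contra h
                exact hx (self_subset_cthickening _ (subset_tsupport f h))
              have e2 : g x = 0 := by
                by_contra h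
                exact hx (cthickening_mono hδ1 _ (hgs (subset_tsupport g h)))
              simp [e1, e2, hq1]
        _ = _ := by
            rw [lintegral_indicator_const isClosed_cthickening.measurableSet, mul_comm]
    gcongr
  have hlim : Filter.Tendsto (fun δ : ℝ => 2 ^ q * (2 * (c * (V1 * ENNReal.ofReal (C * δ) ^ q))
        + 2 * ((2 ^ q) ^ 8 * (ENNReal.ofReal m ^ q * volume (cthickening δ (tsupport f))))))
      (nhdsWithin 0 (Ioi 0)) (nhds (2 ^ q * (2 * (c * (V1 * ENNReal.ofReal (C * 0) ^ q))
        + 2 * ((2 ^ q) ^ 8 * (ENNReal.ofReal m ^ q * volume (tsupport f)))))) := by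
    have t1 : Filter.Tendsto (fun δ : ℝ => ENNReal.ofReal (C * δ) ^ q)
        (nhdsWithin 0 (Ioi 0)) (nhds (ENNReal.ofReal (C * 0) ^ q)) := by
      refine Filter.Tendsto.mono_left ?_ nhdsWithin_le_nhds
      refine Continuous.tendsto (f := fun δ : ℝ => ENNReal.ofReal (C * δ) ^ q) ?_ 0
      exact (ENNReal.continuous_rpow_const).comp (ENNReal.continuous_ofReal.comp (by fun_prop))
    have t2 : Filter.Tendsto (fun δ : ℝ => volume (cthickening δ (tsupport f)))
        (nhdsWithin 0 (Ioi 0)) (nhds (volume (tsupport f))) :=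
      (tendsto_measure_cthickening_of_isCompact hf.isCompact).mono_left nhdsWithin_le_nhds
    refine ENNReal.Tendsto.const_mul (Filter.Tendsto.add ?_ ?_) (Or.inr hA)
    · exact ENNReal.Tendsto.const_mul (ENNReal.Tendsto.const_mul
        (ENNReal.Tendsto.const_mul t1 (Or.inr hV1t)) (Or.inr hct)) (Or.inr (by norm_num))
    · exact ENNReal.Tendsto.const_mul (ENNReal.Tendsto.const_mul
        (ENNReal.Tendsto.const_mul t2 (Or.inr hmt)) (Or.inr (ENNReal.pow_ne_top hA)))
          (Or.inr (by norm_num))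
  refine (ge_of_tendsto hlim ?_).trans ?_
  · filter_upwards [Ioc_mem_nhdsGT (show (0 : ℝ) < 1 by norm_num)] with δ hδ
    exact key δ hδ.1 hδ.2
  · have h2 : (2 : ℝ≥0∞) ≤ 2 ^ q := le_trans (by norm_num) (four_le_A hq)
    rw [mul_zero, ENNReal.ofReal_zero, ENNReal.zero_rpow_of_pos hq1]
    simp only [mul_zero, zero_add]
    calc _ ≤ (2 : ℝ≥0∞) ^ q * (2 ^ q * ((2 ^ q) ^ 8 * (ENNReal.ofReal m ^ q *
          volume (tsupport f)))) := by
          refine mul_le_mul_right (mul_le_mul_left h2 _) _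
      _ = _ := by ring

end Moll

section Final

variable {n : ℕ} {N : EuclideanSpace ℝ (Fin n) → ℝ}
variable {Y : Type u} [NormedAddCommGroup Y] [NormedSpace ℝ Y]

lemma ball_scale (hN : IsNorm N) (x : EuclideanSpace ℝ (Fin n)) {t : ℝ} (ht : 0 < t)
    (φ : EuclideanSpace ℝ (Fin n) → ℝ≥0∞) :
    ∫⁻ ξ in KB N 1, φ (x + t • ξ) =
      ENNReal.ofReal |(t ^ Module.finrank ℝ (EuclideanSpace ℝ (Fin n)))⁻¹| *
        ∫⁻ y in {y | N (y - x) ≤ t}, φ y := by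
  have hS : MeasurableSet {y | N (y - x) ≤ t} :=
    (isClosed_le ((N_cont hN).comp (by fun_prop)) continuous_const).measurableSet
  rw [← lintegral_indicator hS,
    ← lintegral_add_left_eq_self ({y | N (y - x) ≤ t}.indicator φ) x, ← smul_eq_mul,
    ← lintegral_smul_measure, ← Measure.map_addHaar_smul volume ht.ne',
    (measurableEmbedding_const_smul₀ ht.ne').lintegral_map, ← lintegral_indicator (KB_meas hN 1)]
  refine lintegral_congr fun ξ => ?_
  have hiff : x + t • ξ ∈ {y | N (y - x) ≤ t} ↔ ξ ∈ KB N 1 := by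
    simp only [KB, mem_ofPred_eq, add_sub_cancel_left, N_smul hN ht.le]
    exact mul_le_iff_le_one_right ht
  by_cases h : ξ ∈ KB N 1
  · rw [indicator_of_mem h, indicator_of_mem (hiff.2 h)]
  · rw [indicator_of_notMem h, indicator_of_notMem (fun h' => h (hiff.1 h'))]

lemma ball_avg (hN : IsNorm N) (x : EuclideanSpace ℝ (Fin n)) {t : ℝ} (ht : 0 < t)
    (φ : EuclideanSpace ℝ (Fin n) → ℝ≥0∞) :
    (∫⁻ y in {y | N (y - x) ≤ t}, φ y) / volume {y | N (y - x) ≤ t}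
      = ∫⁻ ξ, φ (x + t • ξ) ∂(uni N 1) := by
  have h1 := ball_scale hN x ht φ
  have h2 := ball_scale hN x ht (fun _ => 1)
  simp only [lintegral_const, one_mul, Measure.restrict_apply_univ] at h2
  rw [lintegral_uni, h1, h2]
  set k := ENNReal.ofReal |(t ^ Module.finrank ℝ (EuclideanSpace ℝ (Fin n)))⁻¹| with hk
  have hk0 : k ≠ 0 := by
    rw [hk]
    simp only [ne_eq, ENNReal.ofReal_eq_zero, not_le, abs_pos]
    positivity
  have hkt : k ≠ ⊤ := ENNReal.ofReal_ne_top
  rw [ENNReal.mul_inv (Or.inl hk0) (Or.inl hkt), mul_assoc, mul_left_comm _ k, ← mul_assoc,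
    ENNReal.inv_mul_cancel hk0 hkt, one_mul, ENNReal.div_eq_inv_mul]

lemma Phi_meas (hN : IsNorm N) {f : EuclideanSpace ℝ (Fin n) → Y} (hf : Continuous f)
    {q : ℝ} (hq : 2 ≤ q) :
    Measurable (fun p : EuclideanSpace ℝ (Fin n) × ℝ => Phi N q f p.1 p.2) := by
  have hq0 : 0 ≤ q := by linarith
  refine UpperSemicontinuous.measurable (upperSemicontinuous_biInf fun Λ hΛ => ?_)
  have hΛc : Continuous Λ := lip_cont hN hΛ
  refine Continuous.upperSemicontinuous ?_
  have e : ∀ p : EuclideanSpace ℝ (Fin n) × ℝ,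
      ∫⁻ ξ, ‖f (p.1 + p.2 • ξ) - Λ (p.1 + p.2 • ξ)‖ₑ ^ q ∂(uni N 1) =
      (volume (KB N 1))⁻¹ * ENNReal.ofReal
        (∫ ξ in KB N 1, ‖f (p.1 + p.2 • ξ) - Λ (p.1 + p.2 • ξ)‖ ^ q) := by
    intro p
    rw [lintegral_uni, ofReal_integral_eq_lintegral_ofReal]
    · congr 2 with ξ
      rw [← ENNReal.ofReal_rpow_of_nonneg (norm_nonneg _) hq0, ofReal_norm]
    · refine (ContinuousOn.integrableOn_compact (KB_compact hN 1) ?_)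
      exact ((((hf.comp (by fun_prop)).sub (hΛc.comp (by fun_prop))).norm).rpow_const
        fun _ => Or.inr hq0).continuousOn
    · exact ae_of_all _ fun ξ => by positivity
  simp_rw [e]
  refine (ENNReal.continuous_const_mul (ENNReal.inv_ne_top.2 (KB_vol_ne_zero hN one_pos))).comp
    (ENNReal.continuous_ofReal.comp ?_)
  refine continuous_parametric_integral_of_continuous (μ := volume) (f :=
    fun (p : EuclideanSpace ℝ (Fin n) × ℝ) ξ => ‖f (p.1 + p.2 • ξ) - Λ (p.1 + p.2 • ξ)‖ ^ q) ?_
    (KB_compact hN 1)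
  exact (((hf.comp (by fun_prop)).sub (hΛc.comp (by fun_prop))).norm).rpow_const
    fun _ => Or.inr hq0

lemma tsum_int_le {h : ℤ → ℝ≥0∞} {B : ℝ≥0∞}
    (hB : ∀ (k : ℤ) (J : ℕ), ∑ i ∈ Finset.range J, h (k + i) ≤ B) : ∑' k, h k ≤ B := by
  rw [ENNReal.tsum_eq_iSup_sum]
  refine iSup_le fun s => ?_
  obtain ⟨M, hM⟩ : ∃ M : ℕ, ∀ k ∈ s, |k| < M := by
    refine ⟨(∑ k ∈ s, |k|).toNat + 1, fun k hk => ?_⟩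
    have := Finset.single_le_sum (f := fun k : ℤ => |k|) (fun i _ => abs_nonneg i) hk
    have h2 := Int.self_le_toNat (∑ k ∈ s, |k|)
    push_cast
    linarith
  refine le_trans ?_ (hB (-M) (2 * M))
  rw [← Finset.sum_image (f := h) (g := fun i : ℕ => (-M + i : ℤ))]
  · refine Finset.sum_le_sum_of_subset fun k hk => ?_
    have := abs_lt.1 (hM k hk)
    refine Finset.mem_image.2 ⟨(k + M).toNat, ?_, ?_⟩
    · rw [Finset.mem_range]; omega
    · omega
  · intro i _ j _ hij
    simpa using hij

lemma scale_sum {ψ : ℝ → ℝ≥0∞} (hψ : Measurable ψ) {q b : ℝ} (hb : 1 < b) {B : ℝ≥0∞}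
    (hB : ∀ (a : ℕ → ℝ), (∀ j, 0 < a j) → (∀ j, a (j + 1) = b * a j) → ∀ J : ℕ,
      ∑ i ∈ Finset.range J, ((ENNReal.ofReal (a i))⁻¹) ^ q * ψ (a i) ≤ B) :
    ∫⁻ t in Ioi (0 : ℝ), (ENNReal.ofReal (t ^ (q + 1)))⁻¹ * ψ t
      ≤ ENNReal.ofReal (Real.log b) * B := by
  set l := Real.log b with hl
  have hl0 : 0 < l := Real.log_pos hb
  let h : ℝ → ℝ≥0∞ := fun s => ((ENNReal.ofReal (Real.exp s))⁻¹) ^ q * ψ (Real.exp s)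
  have hh : Measurable h := by
    refine Measurable.mul ?_ (hψ.comp Real.measurable_exp)
    exact ((ENNReal.measurable_ofReal.comp Real.measurable_exp).inv).pow_const q
  have e1 : ∫⁻ t in Ioi (0 : ℝ), (ENNReal.ofReal (t ^ (q + 1)))⁻¹ * ψ t = ∫⁻ s, h s := by
    rw [← Real.range_exp, ← image_univ, lintegral_image_eq_lintegral_abs_deriv_mul
      MeasurableSet.univ (fun x _ => (Real.hasDerivAt_exp x).hasDerivWithinAt)
      Real.exp_injective.injOn, Measure.restrict_univ]
    refine lintegral_congr fun s => ?_
    have hs := Real.exp_pos s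
    rw [abs_of_pos hs, ← mul_assoc, ← ENNReal.ofReal_rpow_of_pos hs]
    simp only [h]
    congr 1
    have hne : ENNReal.ofReal (Real.exp s) ≠ 0 := by simpa using hs
    rw [ENNReal.inv_rpow, ← ENNReal.rpow_neg, ← ENNReal.rpow_neg]
    nth_rewrite 1 [← ENNReal.rpow_one (ENNReal.ofReal (Real.exp s))]
    rw [← ENNReal.rpow_add _ _ hne ENNReal.ofReal_ne_top]
    congr 1
    ring
  have e2 : ∫⁻ s, h s = ∑' k : ℤ, ∫⁻ s in Ioc (0 : ℝ) l, h (s + k * l) := by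
    rw [← setLIntegral_univ, ← iUnion_Ioc_zsmul hl0, lintegral_iUnion
      (fun _ => measurableSet_Ioc) (pairwise_disjoint_Ioc_zsmul l)]
    refine tsum_congr fun k => ?_
    rw [← lintegral_indicator measurableSet_Ioc, ← lintegral_indicator measurableSet_Ioc,
      ← lintegral_add_right_eq_self _ (k * l)]
    refine lintegral_congr fun s => ?_
    have hiff : s + k * l ∈ Ioc (k • l) ((k + 1) • l) ↔ s ∈ Ioc 0 l := by
      simp only [mem_Ioc, zsmul_eq_mul]
      push_cast
      constructor <;> rintro ⟨h1, h2⟩ <;> constructor <;> linarith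
    by_cases hs : s ∈ Ioc 0 l
    · rw [indicator_of_mem hs, indicator_of_mem (hiff.2 hs)]
    · rw [indicator_of_notMem hs, indicator_of_notMem (fun h' => hs (hiff.1 h'))]
  have hhk : ∀ k : ℤ, AEMeasurable (fun s => h (s + k * l)) (volume.restrict (Ioc (0 : ℝ) l)) :=
    fun k => (hh.comp (measurable_add_const _)).aemeasurable
  rw [e1, e2, ← lintegral_tsum hhk]
  calc ∫⁻ s in Ioc (0 : ℝ) l, ∑' k : ℤ, h (s + k * l) ≤ ∫⁻ s in Ioc (0 : ℝ) l, B := by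
        refine lintegral_mono fun s => tsum_int_le fun k J => ?_
        have := hB (fun i => Real.exp (s + (k + i : ℤ) * l)) (fun _ => Real.exp_pos _) (by
          intro j
          have eb : b = Real.exp l := (Real.exp_log (by linarith)).symm
          nth_rewrite 1 [eb]
          rw [← Real.exp_add]
          push_cast
          ring_nf) J
        exact this
    _ = _ := by simp [mul_comm]

lemma const_bound {n : ℕ} (hn : 4 ≤ n) {q : ℝ} (hq : 2 ≤ q) :
    Real.log n ^ (1 / q) ≤ (n : ℝ) ^ ((9 : ℝ) / 20) * Real.log n ^ ((1 : ℝ) / 5) := by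
  have hn4 : (4 : ℝ) ≤ n := by exact_mod_cast hn
  have hl : 1 ≤ Real.log n := by
    rw [Real.le_log_iff_exp_le (by linarith)]
    have := Real.exp_one_lt_three
    linarith
  have hl0 : 0 < Real.log n := by linarith
  calc Real.log n ^ (1 / q) ≤ Real.log n ^ ((3 : ℝ) / 10 + 1 / 5) := by
        refine Real.rpow_le_rpow_of_exponent_le hl ?_
        rw [div_le_iff₀ (by linarith)]
        linarith
    _ = Real.log n ^ ((3 : ℝ) / 10) * Real.log n ^ ((1 : ℝ) / 5) := Real.rpow_add hl0 _ _
    _ ≤ (n : ℝ) ^ ((3 : ℝ) / 10) * Real.log n ^ ((1 : ℝ) / 5) := by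
        gcongr
        exact Real.log_le_self (by linarith)
    _ ≤ _ := by
        refine mul_le_mul_of_nonneg_right ?_ (by positivity)
        exact Real.rpow_le_rpow_of_exponent_le (by linarith) (by norm_num)

lemma main_rw (hN : IsNorm N) (f : EuclideanSpace ℝ (Fin n) → Y) (q : ℝ) :
    (∫⁻ x, ∫⁻ t in Set.Ioi (0 : ℝ),
            (⨅ Λ ∈ {Λ : EuclideanSpace ℝ (Fin n) →ᵃ[ℝ] Y | ∀ u v, ‖Λ u - Λ v‖ ≤ N (u - v)},
                (∫⁻ y in {y : EuclideanSpace ℝ (Fin n) | N (y - x) ≤ t},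
                    (‖f y - Λ y‖₊ : ℝ≥0∞) ^ q)
                  / volume {y : EuclideanSpace ℝ (Fin n) | N (y - x) ≤ t})
              / ENNReal.ofReal (t ^ (q + 1)))
      = ∫⁻ x, ∫⁻ t in Set.Ioi (0 : ℝ), (ENNReal.ofReal (t ^ (q + 1)))⁻¹ * Phi N q f x t := by
  refine lintegral_congr fun x => setLIntegral_congr_fun measurableSet_Ioi fun t ht => ?_
  rw [ENNReal.div_eq_inv_mul, Phi]
  congr 1
  refine iInf_congr fun Λ => iInf_congr fun hΛ => ?_
  exact ball_avg hN x ht (fun y => ‖f y - Λ y‖ₑ ^ q)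

lemma swap_gen {k : ℝ → ℝ≥0∞} (hk : Measurable k) {P : EuclideanSpace ℝ (Fin n) → ℝ → ℝ≥0∞}
    (hP : Measurable fun p : EuclideanSpace ℝ (Fin n) × ℝ => P p.1 p.2) :
    ∫⁻ x, ∫⁻ t in Set.Ioi (0 : ℝ), k t * P x t
      = ∫⁻ t in Set.Ioi (0 : ℝ), k t * ∫⁻ x, P x t := by
  have hmeas : Measurable (Function.uncurry fun (x : EuclideanSpace ℝ (Fin n)) (t : ℝ) =>
      k t * P x t) := (hk.comp measurable_snd).mul hP
  rw [lintegral_lintegral_swap hmeas.aemeasurable]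
  refine lintegral_congr fun t => ?_
  have h2 : Measurable fun x => P x t := hP.comp measurable_prodMk_right
  exact lintegral_const_mul _ h2

lemma main_swap (hN : IsNorm N) {f : EuclideanSpace ℝ (Fin n) → Y}
    (hL : ∀ x y, ‖f x - f y‖ ≤ N (x - y)) {q : ℝ} (hq : 2 ≤ q) :
    ∫⁻ x, ∫⁻ t in Set.Ioi (0 : ℝ), (ENNReal.ofReal (t ^ (q + 1)))⁻¹ * Phi N q f x t
      = ∫⁻ t in Set.Ioi (0 : ℝ), (ENNReal.ofReal (t ^ (q + 1)))⁻¹ * ∫⁻ x, Phi N q f x t := by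
  have hfc := lip_cont hN hL
  have hΦ := Phi_meas hN hfc hq
  have hk : Measurable fun t : ℝ => (ENNReal.ofReal (t ^ (q + 1)))⁻¹ := by fun_prop
  exact swap_gen hk hΦ

lemma main_bd [CompleteSpace Y] (hN : IsNorm N) (hn : 4 ≤ n)
    {f : EuclideanSpace ℝ (Fin n) → Y} {m : ℝ}
    (hf : HasCompactSupport f) (hL : ∀ x y, ‖f x - f y‖ ≤ N (x - y))
    {q : ℝ} (hq : 2 ≤ q) (hm : MartCotypeBound q Y m) (K : ℝ≥0∞)
    (hK : K = (2 ^ q) ^ 10 * (ENNReal.ofReal m ^ q * volume (tsupport f))) :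
    ∫⁻ t in Set.Ioi (0 : ℝ), (ENNReal.ofReal (t ^ (q + 1)))⁻¹ * ∫⁻ x, Phi N q f x t
      ≤ ENNReal.ofReal (Real.log n) * K := by
  have hΦ := Phi_meas hN (lip_cont hN hL) hq
  have hψ : Measurable fun t => ∫⁻ x, Phi N q f x t := hΦ.lintegral_prod_left'
  have h1 : (1 : ℝ) < n := by
    have : 1 < n := by omega
    exact_mod_cast this
  refine scale_sum (ψ := fun t => ∫⁻ x, Phi N q f x t) hψ h1 ?_
  intro a ha han J
  rw [hK]
  exact Phi_sum hN hn hf hL a hq hm ha han J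

lemma main_est [CompleteSpace Y] (hN : IsNorm N) (hn : 4 ≤ n)
    {f : EuclideanSpace ℝ (Fin n) → Y} {m : ℝ}
    (hf : HasCompactSupport f) (hL : ∀ x y, ‖f x - f y‖ ≤ N (x - y))
    {q : ℝ} (hq : 2 ≤ q) (hm : MartCotypeBound q Y m) (K : ℝ≥0∞)
    (hK : K = (2 ^ q) ^ 10 * (ENNReal.ofReal m ^ q * volume (tsupport f))) :
    (∫⁻ x, ∫⁻ t in Set.Ioi (0 : ℝ),
            (⨅ Λ ∈ {Λ : EuclideanSpace ℝ (Fin n) →ᵃ[ℝ] Y | ∀ u v, ‖Λ u - Λ v‖ ≤ N (u - v)},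
                (∫⁻ y in {y : EuclideanSpace ℝ (Fin n) | N (y - x) ≤ t},
                    (‖f y - Λ y‖₊ : ℝ≥0∞) ^ q)
                  / volume {y : EuclideanSpace ℝ (Fin n) | N (y - x) ≤ t})
              / ENNReal.ofReal (t ^ (q + 1)))
      ≤ ENNReal.ofReal (Real.log n) * K := by
  rw [main_rw hN f q, main_swap hN hL hq]
  exact main_bd hN hn hf hL hq hm K hK

end Final

end Dorr

/-- **Theorem (intrinsic vector-valued Dorronsoro estimate).** For `q ∈ [2,∞)`, `n ≥ q²`,
an `n`-dimensional normed space `X = (ℝⁿ, N)` and a Banach space `Y` of martingale cotype `q`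
(with constant `m`), every compactly supported `1`-Lipschitz `f : X → Y` satisfies
`(∫_X ∫_0^∞ inf_{Λ affine, ‖Λ‖_Lip ≤ 1} ⨍_{x+tB_X} ‖f-Λ‖^q/t^{q+1} dy dt dx)^{1/q}
  ≤ C n^{9/20} (log n)^{1/5} 𝔪_q(Y) |supp f|^{1/q}`. -/
theorem statement3 :
    ∃ C : ℝ, 0 < C ∧
      ∀ (q : ℝ), 2 ≤ q → ∀ (n : ℕ), 0 < n → q ^ 2 ≤ (n : ℝ) →
      ∀ (N : EuclideanSpace ℝ (Fin n) → ℝ), IsNorm N →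
      ∀ (Y : Type u) [NormedAddCommGroup Y] [NormedSpace ℝ Y] [CompleteSpace Y],
      ∀ m : ℝ, 0 ≤ m → MartCotypeBound q Y m →
      ∀ f : EuclideanSpace ℝ (Fin n) → Y,
        HasCompactSupport f → (∀ x y, ‖f x - f y‖ ≤ N (x - y)) →
        (∫⁻ x, ∫⁻ t in Set.Ioi (0 : ℝ),
            (⨅ Λ ∈ {Λ : EuclideanSpace ℝ (Fin n) →ᵃ[ℝ] Y | ∀ u v, ‖Λ u - Λ v‖ ≤ N (u - v)},
                (∫⁻ y in {y : EuclideanSpace ℝ (Fin n) | N (y - x) ≤ t},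
                    (‖f y - Λ y‖₊ : ℝ≥0∞) ^ q)
                  / volume {y : EuclideanSpace ℝ (Fin n) | N (y - x) ≤ t})
              / ENNReal.ofReal (t ^ (q + 1))) ^ (1 / q)
          ≤ ENNReal.ofReal
              (C * (n : ℝ) ^ ((9 : ℝ) / 20) * Real.log n ^ ((1 : ℝ) / 5) * m)
              * volume (tsupport f) ^ (1 / q) := by
  refine ⟨1024, by norm_num, ?_⟩
  intro q hq n _ hqn N hN Y _ _ _ m hm0 hm f hf hL
  have hq0 : 0 < q := by linarith
  have hn : 4 ≤ n := by
    have : (4 : ℝ) ≤ n := by nlinarith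
    exact_mod_cast this
  have hn4 : (4 : ℝ) ≤ n := by exact_mod_cast hn
  have hlog : 0 ≤ Real.log n := Real.log_nonneg (by linarith)
  have hq1 : 0 ≤ 1 / q := by positivity
  refine (ENNReal.rpow_le_rpow (Dorr.main_est hN hn hf hL hq hm _ rfl) hq1).trans ?_
  have hqq : q * (1 / q) = 1 := by field_simp
  have e10 : ((2 : ℝ≥0∞) ^ q) ^ 10 = (1024 : ℝ≥0∞) ^ q := by
    rw [← ENNReal.rpow_natCast, ← ENNReal.rpow_mul, mul_comm, ENNReal.rpow_mul,
      ENNReal.rpow_natCast]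
    norm_num
  rw [ENNReal.mul_rpow_of_nonneg _ _ hq1, ENNReal.mul_rpow_of_nonneg _ _ hq1,
    ENNReal.mul_rpow_of_nonneg _ _ hq1, e10, ← ENNReal.rpow_mul, ← ENNReal.rpow_mul, hqq,
    ENNReal.rpow_one, ENNReal.rpow_one, ENNReal.ofReal_rpow_of_nonneg hlog hq1,
    ← mul_assoc, ← mul_assoc, ENNReal.ofReal_mul (by positivity)]
  refine mul_le_mul_left (mul_le_mul_left ?_ _) _
  have hc := Dorr.const_bound hn hq
  calc ENNReal.ofReal (Real.log n ^ (1 / q)) * 1024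
      = ENNReal.ofReal (Real.log n ^ (1 / q) * 1024) := by
        rw [ENNReal.ofReal_mul (by positivity)]
        norm_num
    _ ≤ _ := by
        refine ENNReal.ofReal_le_ofReal ?_
        nlinarith
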